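/- Consider ℤ_q-synchronization on a uniformly random simple k-regular graph on n vertices, and define k_*(p;q) := 2 log q / [ (1 − p + p/q)·log(p + q(1−p)) + (1 − 1/q)·p·log p ]. If k > k_*(p;q), then there exist δ, c₀ > 0 depending only on (k,p,q) such that, with probability at least 1 − c₀⁻¹ exp(−c₀ (log n)²), d_TV( ω̂_{θ̂,θ₀}, ν̄×ν̄ ) ≥ δ, where θ̂ is any estimator outputting an element of Θ(η_n;G_n,Y) whenever nonempty. Furthermore, there exist C > 0 and p₀ ∈ (0,1) such that for all p ∈ (p₀,1): | k_*(p;q) − 4 log q / ((q−1)(1−p)²) | ≤ C·(1−p)⁻¹. -/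

import Mathlib

open MeasureTheory ProbabilityTheory Filter
open scoped ENNReal Classical

noncomputable section

/-- `g` is the adjacency function of a simple `k`-regular graph on `Fin n`. -/
def IsRegAdj (n k : ℕ) (g : Fin n → Fin n → Bool) : Prop :=
  (∀ u v, g u v = g v u) ∧ (∀ u, g u u = false) ∧
    ∀ u, (Finset.univ.filter fun v => g u v = true).card = k

/-- The edges of such a graph, each with its canonical orientation. -/
def edgesOf {n : ℕ} (g : Fin n → Fin n → Bool) : Finset (Fin n × Fin n) :=
  Finset.univ.filter fun e => e.1 < e.2 ∧ g e.1 e.2 = true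

/-- A probability space carrying a random graph on `n` vertices, labels, edge
observations and auxiliary uniform random variables for the side information. -/
structure RegSpace (X Y' : Type*) (n : ℕ) where
  Ω : Type
  mΩ : MeasurableSpace Ω
  P : @Measure Ω mΩ
  θ0 : Ω → Fin n → X
  G : Ω → Fin n → Fin n → Bool
  Yobs : Fin n × Fin n → Ω → Y'
  U : Ω → Fin n → ℝ

attribute [instance] RegSpace.mΩ

/-- `M` carries the observation model with kernel `Q` on a uniformly random simple
`k`-regular graph on `n` (labelled) vertices: the graph is uniform among `k`-regular
graphs, the labels are i.i.d. uniform and independent of the graph, and conditionally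
on graph and labels the edge observations are independent with law `Q(·|θ_u,θ_v)`. -/
def RegSpace.IsRegModel {X Y' : Type*} [Fintype X] [Fintype Y'] (Q : X → X → Y' → ℝ)
    (k : ℕ) {n : ℕ} (M : RegSpace X Y' n) : Prop :=
  IsProbabilityMeasure M.P ∧
  (∀ v, @Measurable _ _ M.mΩ ⊤ (fun ω => M.θ0 ω v)) ∧
  (@Measurable _ _ M.mΩ ⊤ M.G) ∧
  (∀ e, @Measurable _ _ M.mΩ ⊤ (M.Yobs e)) ∧
  (∀ v, @Measurable _ _ M.mΩ inferInstance (fun ω => M.U ω v)) ∧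
  (M.P {ω | IsRegAdj n k (M.G ω)} = 1) ∧
  (∀ g : Fin n → Fin n → Bool, IsRegAdj n k g →
    ∀ (σ : Fin n → X) (F : Finset (Fin n × Fin n)), (∀ e ∈ F, e ∈ edgesOf g) →
    ∀ y : Fin n × Fin n → Y',
      (M.P {ω | M.G ω = g ∧ M.θ0 ω = σ ∧ ∀ e ∈ F, M.Yobs e ω = y e}).toReal
        = (Nat.card {g' : Fin n → Fin n → Bool // IsRegAdj n k g'} : ℝ)⁻¹ *
          ((Fintype.card X : ℝ)⁻¹) ^ n * ∏ e ∈ F, Q (σ e.1) (σ e.2) (y e))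

/-- The auxiliary variables `U` are i.i.d. uniform on [0,1] and independent of
everything else. -/
def RegSpace.HasUniformSide {X Y' : Type*} {n : ℕ} (M : RegSpace X Y' n) : Prop :=
  ∀ (T : Finset (Fin n)) (a : Fin n → ℝ), (∀ v, a v ∈ Set.Icc (0:ℝ) 1) →
    ∀ A : Set ((Fin n → X) × (Fin n → Fin n → Bool) × (Fin n × Fin n → Y')),
      (M.P {ω | (∀ v ∈ T, M.U ω v ≤ a v) ∧
          (M.θ0 ω, M.G ω, fun e => M.Yobs e ω) ∈ A}).toReal
        = (∏ v ∈ T, a v) *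
          (M.P {ω | (M.θ0 ω, M.G ω, fun e => M.Yobs e ω) ∈ A}).toReal

variable {X Y' : Type*}

/-- Edge empirical distribution of a configuration and observations. -/
def empEdge [Fintype X] [Fintype Y'] {n : ℕ} (g : Fin n → Fin n → Bool) (θ : Fin n → X)
    (y : Fin n × Fin n → Y') (x1 x2 : X) (b : Y') : ℝ :=
  ((edgesOf g).card : ℝ)⁻¹ *
    (((edgesOf g).filter fun e => θ e.1 = x1 ∧ θ e.2 = x2 ∧ y e = b).card : ℝ)

/-- The reference edge distribution ν̄_e(x₁,x₂,y) = ν̄(x₁)ν̄(x₂)Q(y|x₁,x₂). -/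
def nuBarE [Fintype X] (Q : X → X → Y' → ℝ) (x1 x2 : X) (b : Y') : ℝ :=
  (Fintype.card X : ℝ)⁻¹ * (Fintype.card X : ℝ)⁻¹ * Q x1 x2 b

/-- Total variation distance between the edge empirical distribution and ν̄_e. -/
def dTVedge [Fintype X] [Fintype Y'] {n : ℕ} (Q : X → X → Y' → ℝ)
    (g : Fin n → Fin n → Bool) (θ : Fin n → X) (y : Fin n × Fin n → Y') : ℝ :=
  (2:ℝ)⁻¹ * ∑ x1, ∑ x2, ∑ b, |empEdge g θ y x1 x2 b - nuBarE Q x1 x2 b|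

/-- η_n = (log n)/√n. -/
def ηseq (n : ℕ) : ℝ := Real.log n / Real.sqrt n

/-- The typical set Θ(η;G,Y). -/
def typicalSet [Fintype X] [Fintype Y'] {n : ℕ} (Q : X → X → Y' → ℝ) (η : ℝ)
    (g : Fin n → Fin n → Bool) (y : Fin n × Fin n → Y') : Set (Fin n → X) :=
  {θ | dTVedge Q g θ y ≤ η}

/-- Joint vertex empirical distribution of two configurations. -/
def empVert [Fintype X] {n : ℕ} (a b : Fin n → X) (x1 x2 : X) : ℝ :=
  (n : ℝ)⁻¹ * ((Finset.univ.filter fun u => a u = x1 ∧ b u = x2).card : ℝ)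

/-- Total variation distance between the joint vertex empirical distribution and
ν̄ × ν̄. -/
def dTVvert [Fintype X] {n : ℕ} (a b : Fin n → X) : ℝ :=
  (2:ℝ)⁻¹ * ∑ x1, ∑ x2,
    |empVert a b x1 x2 - (Fintype.card X : ℝ)⁻¹ * (Fintype.card X : ℝ)⁻¹|

/-- The σ-algebra generated by the graph and the edge observations. -/
def RegSpace.obsAlg {n : ℕ} (M : RegSpace X Y' n) : MeasurableSpace M.Ω :=
  MeasurableSpace.comap
    (fun ω => (M.G ω,
      fun e => if e ∈ edgesOf (M.G ω) then some (M.Yobs e ω) else none)) ⊤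

/-- An admissible estimator: a function of (G,Y) outputting a typical configuration
whenever one exists. -/
def IsTypEstimator [Fintype X] [Fintype Y'] (Q : X → X → Y' → ℝ) {n : ℕ}
    (M : RegSpace X Y' n) (θhat : M.Ω → Fin n → X) : Prop :=
  (@Measurable _ _ M.obsAlg ⊤ θhat) ∧
  ∀ ω, (typicalSet Q (ηseq n) (M.G ω) (fun e => M.Yobs e ω)).Nonempty →
    θhat ω ∈ typicalSet Q (ηseq n) (M.G ω) (fun e => M.Yobs e ω)

/-- The ℤ_q-synchronization kernel: Y = θ_u - θ_v with probability 1-p, uniform noise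
with probability p. -/
def Qsync (q : ℕ) [NeZero q] (p : ℝ) (x1 x2 y : ZMod q) : ℝ :=
  (1 - p) * (if y = x1 - x2 then (1:ℝ) else 0) + p / q

/-- The threshold k_*(p;q). -/
def kstar (p : ℝ) (q : ℕ) : ℝ :=
  2 * Real.log q /
    ((1 - p + p / q) * Real.log (p + q * (1 - p)) + (1 - 1 / (q : ℝ)) * p * Real.log p)

open scoped BigOperators

/-!
A typical `θ` that is nearly uncorrelated with `θ₀` differs from it by a shift `ψ = θ - θ₀` whose
colour classes all have about `n / q` vertices. For a fixed such `ψ`, typicality of `θ₀ + ψ` forces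
a fraction `1 - p + p / q` of the `m = n k / 2` observations to agree with `θ₀ + ψ`. Conditionally
on the graph and on `θ₀`, a Chernoff bound, tilted by the likelihood ratio of agreement against
disagreement, reduces the probability of this event to the expectation of a product over the edges
of the graph of factors depending on the colours of their ends. Up to a polynomial factor, that
expectation is at most the `m`-th power of the one for two independent uniform colours: simple
configurations are a polynomial fraction of all configurations (by a switching argument), and in a
uniform configuration the colours of the half-edges may be taken independent. The result is
`exp (-m (I - o(1)))`, where `I` is the denominator of `k_*`. There are at most `q ^ n` shifts, so
the union bound succeeds exactly when `log q < k I / 2`, that is when `k_* < k`. The true labels are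
themselves typical, by a bounded-differences inequality given the graph, so that the typical set is
nonempty.
-/

/-! ### Configurations -/

/-- A configuration: `m` ordered and oriented edges, each with two ends (the slots), and a
bijective assignment of the `k` half-edges at each of `n` vertices to the slots. -/
abbrev Config (n k m : ℕ) := (Fin m × Bool) ≃ (Fin n × Fin k)

/-- The slot at the opposite end of the same edge. -/
def flipSlot {m : ℕ} (s : Fin m × Bool) : Fin m × Bool := (s.1, !s.2)

/-- The ordered pair of vertices joined by an edge, read from the slot `s` towards the opposite
slot. -/
def endPair {n k m : ℕ} (σ : Config n k m) (s : Fin m × Bool) : Fin n × Fin n :=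
  ((σ s).1, (σ (flipSlot s)).1)

/-- The slots attached to the vertex `a`. -/
def slotsAt {n k m : ℕ} (σ : Config n k m) (a : Fin n) : Finset (Fin m × Bool) :=
  Finset.univ.filter fun t => (σ t).1 = a

/-- The slots attached to the vertex `a` or to one of its neighbours. -/
def slotsNear {n k m : ℕ} (σ : Config n k m) (a : Fin n) : Finset (Fin m × Bool) :=
  Finset.univ.filter fun t => (σ t).1 = a ∨ ∃ s, endPair σ s = (a, (σ t).1)

/-- The points at which `f` fails to be injective. -/
def collisions {α β : Type*} [Fintype α] (f : α → β) : Finset α :=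
  Finset.univ.filter fun s => ∃ t, t ≠ s ∧ f t = f s

/-- The configuration `σ` with the half-edges at the slots `s` and `t` exchanged. -/
def swapSlots {n k m : ℕ} (s t : Fin m × Bool) (σ : Config n k m) : Config n k m :=
  (Equiv.swap s t).trans σ

section Slots

variable {n k m : ℕ} (σ : Config n k m)

lemma flipSlot_involutive : Function.Involutive (flipSlot (m := m)) :=
  fun s => Prod.ext rfl (Bool.not_not s.2)

@[simp]
lemma flipSlot_flipSlot (s : Fin m × Bool) : flipSlot (flipSlot s) = s :=
  flipSlot_involutive s

@[simp]
lemma flipSlot_ne_self (s : Fin m × Bool) : flipSlot s ≠ s :=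
  fun h => Bool.not_ne_self s.2 (congrArg Prod.snd h)

@[simp]
lemma endPair_flipSlot (s : Fin m × Bool) : endPair σ (flipSlot s) = (endPair σ s).swap := by
  simp [endPair]

lemma swapSlots_involutive (s t : Fin m × Bool) :
    Function.Involutive (swapSlots (n := n) (k := k) s t) := fun σ => by
  ext x <;> simp [swapSlots]

lemma card_slotsAt (a : Fin n) : (slotsAt σ a).card = k := by
  have himage : slotsAt σ a = Finset.univ.image fun i => σ.symm (a, i) := by
    ext t
    simp only [slotsAt, Finset.mem_filter, Finset.mem_univ, true_and, Finset.mem_image,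
      Equiv.symm_apply_eq]
    exact ⟨fun h => ⟨(σ t).2, Prod.ext h.symm rfl⟩, fun ⟨_, h⟩ => congrArg Prod.fst h.symm⟩
  rw [himage, Finset.card_image_of_injective _ fun i j h => by simpa using h, Finset.card_univ,
    Fintype.card_fin]

lemma card_slotsNear_le (a : Fin n) : (slotsNear σ a).card ≤ k + k ^ 2 := by
  have hsub : slotsNear σ a ⊆
      slotsAt σ a ∪ (slotsAt σ a).biUnion fun s => slotsAt σ (σ (flipSlot s)).1 := by
    intro t ht
    simp only [slotsNear, slotsAt, endPair, Prod.mk.injEq, Finset.mem_filter, Finset.mem_univ,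
      true_and, Finset.mem_union, Finset.mem_biUnion] at ht ⊢
    exact ht.imp_right fun ⟨s, hs, hst⟩ => ⟨s, hs, hst.symm⟩
  calc (slotsNear σ a).card
      ≤ (slotsAt σ a).card +
          ((slotsAt σ a).biUnion fun s => slotsAt σ (σ (flipSlot s)).1).card :=
        (Finset.card_le_card hsub).trans (Finset.card_union_le _ _)
    _ ≤ k + k * k := by
        gcongr
        · rw [card_slotsAt]
        · exact (Finset.card_biUnion_le).trans (by simp [card_slotsAt])
    _ = k + k ^ 2 := by ring

end Slots

@[simp]
lemma mem_collisions {α β : Type*} [Fintype α] {f : α → β} {s : α} :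
    s ∈ collisions f ↔ ∃ t, t ≠ s ∧ f t = f s := by
  simp [collisions]

lemma collisions_subset_sdiff {α β : Type*} [Fintype α] [DecidableEq α] {f f' : α → β}
    {C : Finset α} (hoff : ∀ s ∉ C, f' s = f s) (hinj : Set.InjOn f' C)
    (hnew : ∀ c ∈ C, ∀ s, f' c ≠ f s) :
    collisions f' ⊆ collisions f \ C := by
  intro s hs
  rw [Finset.mem_sdiff, mem_collisions]
  obtain ⟨t, hts, htf⟩ := mem_collisions.1 hs
  by_cases hsC : s ∈ C <;> by_cases htC : t ∈ C
  · exact absurd (hinj htC hsC htf) hts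
  · exact absurd (htf.symm.trans (hoff t htC)) (hnew s hsC t)
  · exact absurd (htf.trans (hoff s hsC)) (hnew t htC s)
  · exact ⟨⟨t, hts, by rw [← hoff t htC, ← hoff s hsC, htf]⟩, hsC⟩

lemma collisions_eq_empty_iff {α β : Type*} [Fintype α] {f : α → β} :
    collisions f = ∅ ↔ Function.Injective f := by
  simp only [Finset.eq_empty_iff_forall_notMem, mem_collisions, not_exists, not_and]
  exact ⟨fun h s t hst => by_contra fun hne => h t s hne hst, fun h s t hne hst => hne (h hst)⟩

/-! ### Simple configurations are a polynomial fraction of all configurations -/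

section Switching

variable {n k m : ℕ}

lemma mem_slotsNear_swapSlots {σ : Config n k m} {s t' t : Fin m × Bool} (hne : t' ≠ s)
    (heq : endPair σ t' = endPair σ s) (hts : t ≠ s) (htt' : t ≠ t') (htf : t ≠ flipSlot t') :
    t ∈ slotsNear (swapSlots (flipSlot s) t σ) ((swapSlots (flipSlot s) t σ) s).1 := by
  have hfix : ∀ {u}, u ≠ flipSlot s → u ≠ t → (swapSlots (flipSlot s) t σ) u = σ u :=
    fun h h' => congrArg σ (Equiv.swap_apply_of_ne_of_ne h h')
  have hs : (swapSlots (flipSlot s) t σ) s = σ s := hfix (flipSlot_ne_self s).symm hts.symm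
  have ht : (swapSlots (flipSlot s) t σ) t = σ (flipSlot s) :=
    congrArg σ (Equiv.swap_apply_right _ _)
  simp only [slotsNear, Finset.mem_filter, Finset.mem_univ, true_and, hs, ht]
  obtain ⟨h1, h2⟩ := Prod.mk.inj heq
  by_cases hloop : t' = flipSlot s
  · exact Or.inl (hloop ▸ h1)
  · have hflip : flipSlot t' ≠ flipSlot s := flipSlot_involutive.injective.ne hne
    exact Or.inr ⟨t', by rw [endPair, hfix hloop htt'.symm, hfix hflip htf.symm, h1, h2]⟩

-- Exchanging the slot opposite to a colliding `s` with a random slot `t` records the collision in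
-- the position of `t`, which then lies in a set of bounded size.
lemma card_filter_mem_collisions_le (s : Fin m × Bool) :
    (2 * m - 3) * (Finset.univ.filter fun σ : Config n k m => s ∈ collisions (endPair σ)).card
      ≤ (k + k ^ 2) * Fintype.card (Config n k m) := by
  set near : Fin m × Bool → Config n k m → ℕ := fun t σ =>
    if t ∈ slotsNear σ (σ s).1 then 1 else 0 with hnear
  have hlower (σ : Config n k m) (hσ : s ∈ collisions (endPair σ)) :
      2 * m - 3 ≤ ∑ t, near t (swapSlots (flipSlot s) t σ) := by
    obtain ⟨t', hne, heq⟩ := mem_collisions.1 hσ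
    have hsub : ({s, t', flipSlot t'} : Finset (Fin m × Bool))ᶜ ⊆ Finset.univ.filter fun t =>
        t ∈ slotsNear (swapSlots (flipSlot s) t σ) ((swapSlots (flipSlot s) t σ) s).1 := by
      intro t ht
      simp only [Finset.mem_compl, Finset.mem_insert, Finset.mem_singleton, not_or] at ht
      simp [mem_slotsNear_swapSlots hne heq ht.1 ht.2.1 ht.2.2]
    have hcard := Finset.card_le_card hsub
    have hthree := Finset.card_le_three (a := s) (b := t') (c := flipSlot t')
    simp only [Finset.card_compl, Fintype.card_prod, Fintype.card_fin, Fintype.card_bool] at hcard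
    simp only [hnear, Finset.sum_boole, Nat.cast_id]
    omega
  have hupper (σ : Config n k m) : ∑ t, near t σ ≤ k + k ^ 2 := by
    simpa [hnear] using card_slotsNear_le σ (σ s).1
  calc (2 * m - 3) * (Finset.univ.filter fun σ : Config n k m => s ∈ collisions (endPair σ)).card
      ≤ ∑ σ ∈ Finset.univ.filter fun σ : Config n k m => s ∈ collisions (endPair σ),
          ∑ t, near t (swapSlots (flipSlot s) t σ) := by
        rw [mul_comm]
        exact Finset.card_nsmul_le_sum _ _ _ fun σ hσ => hlower σ (Finset.mem_filter.1 hσ).2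
    _ ≤ ∑ σ : Config n k m, ∑ t, near t (swapSlots (flipSlot s) t σ) :=
        Finset.sum_le_sum_of_subset (Finset.filter_subset _ _)
    _ = ∑ σ : Config n k m, ∑ t, near t σ := by
        rw [Finset.sum_comm, Finset.sum_comm (s := Finset.univ (α := Config n k m))]
        exact Finset.sum_congr rfl fun t _ =>
          Equiv.sum_comp (swapSlots_involutive (flipSlot s) t).toPerm (near t)
    _ ≤ (k + k ^ 2) * Fintype.card (Config n k m) := by
        rw [mul_comm]
        exact Finset.sum_le_card_nsmul _ _ _ fun σ _ => hupper σ

lemma sum_card_collisions_le (hm : 3 ≤ m) :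
    ∑ σ : Config n k m, (collisions (endPair σ)).card
      ≤ 2 * (k + k ^ 2) * Fintype.card (Config n k m) := by
  have hcount : ∑ σ : Config n k m, (collisions (endPair σ)).card = ∑ s : Fin m × Bool,
      (Finset.univ.filter fun σ : Config n k m => s ∈ collisions (endPair σ)).card := by
    simpa only [Finset.bipartiteAbove, Finset.bipartiteBelow, Finset.filter_univ_mem] using
      Finset.sum_card_bipartiteAbove_eq_sum_card_bipartiteBelow
        (s := (Finset.univ : Finset (Config n k m))) (t := Finset.univ)
        fun σ s => s ∈ collisions (endPair σ)
  refine Nat.le_of_mul_le_mul_left ?_ (show 0 < m by omega)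
  calc m * ∑ σ : Config n k m, (collisions (endPair σ)).card
      ≤ (2 * m - 3) * ∑ σ : Config n k m, (collisions (endPair σ)).card := by gcongr; omega
    _ ≤ ∑ _s : Fin m × Bool, (k + k ^ 2) * Fintype.card (Config n k m) := by
        rw [hcount, Finset.mul_sum]
        exact Finset.sum_le_sum fun s _ => card_filter_mem_collisions_le s
    _ = m * (2 * (k + k ^ 2) * Fintype.card (Config n k m)) := by
        simp only [Finset.sum_const, Finset.card_univ, Fintype.card_prod, Fintype.card_fin,
          Fintype.card_bool, smul_eq_mul]
        ring

variable (n k m) in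
/-- The configurations with at most `b` slots on loops or multiple edges; `fewBad n k m 0` consists
of the simple configurations. -/
def fewBad (b : ℕ) : Finset (Config n k m) :=
  Finset.univ.filter fun σ => (collisions (endPair σ)).card ≤ b

lemma mem_fewBad_zero {σ : Config n k m} :
    σ ∈ fewBad n k m 0 ↔ Function.Injective (endPair σ) := by
  simp [fewBad, collisions_eq_empty_iff]

lemma card_config_le_two_mul_fewBad (hm : 3 ≤ m) :
    Fintype.card (Config n k m) ≤ 2 * (fewBad n k m (4 * (k + k ^ 2))).card := by
  set K := k + k ^ 2
  set many : Finset (Config n k m) :=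
    Finset.univ.filter fun σ => ¬ (collisions (endPair σ)).card ≤ 4 * K
  have hsplit : (fewBad n k m (4 * K)).card + many.card = Fintype.card (Config n k m) :=
    Finset.card_filter_add_card_filter_not _
  have hmarkov : many.card * (4 * K + 1) ≤ 2 * K * Fintype.card (Config n k m) :=
    calc many.card * (4 * K + 1)
        ≤ ∑ σ ∈ many, (collisions (endPair σ)).card := by
          rw [← smul_eq_mul]
          exact Finset.card_nsmul_le_sum _ _ _ fun σ hσ => not_le.1 (Finset.mem_filter.1 hσ).2
      _ ≤ ∑ σ : Config n k m, (collisions (endPair σ)).card :=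
          Finset.sum_le_sum_of_subset (Finset.filter_subset _ _)
      _ ≤ 2 * K * Fintype.card (Config n k m) := sum_card_collisions_le hm
  nlinarith

lemma endPair_swapSlots_left {σ : Config n k m} {s t : Fin m × Bool} (hts : t ≠ s) :
    endPair (swapSlots (flipSlot s) t σ) s = ((σ s).1, (σ t).1) :=
  Prod.ext (congrArg (fun x => (σ x).1)
      (Equiv.swap_apply_of_ne_of_ne (flipSlot_ne_self s).symm hts.symm))
    (congrArg (fun x => (σ x).1) (Equiv.swap_apply_left _ _))

lemma endPair_swapSlots_right {σ : Config n k m} {s t : Fin m × Bool} (hts : t ≠ s) :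
    endPair (swapSlots (flipSlot s) t σ) t = ((σ (flipSlot s)).1, (σ (flipSlot t)).1) :=
  Prod.ext (congrArg (fun x => (σ x).1) (Equiv.swap_apply_right _ _))
    (congrArg (fun x => (σ x).1)
      (Equiv.swap_apply_of_ne_of_ne (flipSlot_involutive.injective.ne hts) (flipSlot_ne_self t)))

lemma collisions_swapSlots_subset {σ : Config n k m} {s t : Fin m × Bool}
    (hta : t ∉ slotsNear σ (σ s).1) (htb : t ∉ slotsAt σ (σ (flipSlot s)).1)
    (hfb : flipSlot t ∉ slotsNear σ (σ (flipSlot s)).1) (htc : t ∉ collisions (endPair σ)) :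
    collisions (endPair (swapSlots (flipSlot s) t σ)) ⊆
      collisions (endPair σ) \ {s, flipSlot s, t, flipSlot t} := by
  set σ' := swapSlots (flipSlot s) t σ with hσ'
  simp only [slotsNear, slotsAt, mem_collisions, Finset.mem_filter, Finset.mem_univ, true_and,
    not_or, not_exists, not_and] at hta htb hfb htc
  have hts : t ≠ s := by rintro rfl; exact hta.1 rfl
  have htfs : t ≠ flipSlot s := by rintro rfl; exact htb rfl
  have hfts : flipSlot t ≠ s := fun h => htfs (by rw [← h, flipSlot_flipSlot])
  have hfix : ∀ {u}, u ≠ flipSlot s → u ≠ t → σ' u = σ u :=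
    fun h h' => congrArg σ (Equiv.swap_apply_of_ne_of_ne h h')
  have hs : endPair σ' s = _ := endPair_swapSlots_left hts
  have ht : endPair σ' t = _ := endPair_swapSlots_right hts
  have hmem (u : Fin m × Bool) : u ∈ ({s, flipSlot s, t, flipSlot t} : Finset (Fin m × Bool)) ↔
      u = s ∨ u = flipSlot s ∨ u = t ∨ u = flipSlot t := by simp
  have hsnew (u : Fin m × Bool) : endPair σ u ≠ ((σ s).1, (σ t).1) := hta.2 u
  have htnew (u : Fin m × Bool) : endPair σ u ≠ ((σ (flipSlot s)).1, (σ (flipSlot t)).1) := hfb.2 u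
  have hswap (x y : Fin n) (h : ∀ u, endPair σ u ≠ (x, y)) (u : Fin m × Bool) :
      endPair σ u ≠ (y, x) := fun hu =>
    h (flipSlot u) (by rw [endPair_flipSlot, hu, Prod.swap_prod_mk])
  have hloop : (σ t).1 ≠ (σ (flipSlot t)).1 := fun h => htc (flipSlot t) (flipSlot_ne_self t)
    (by simp [endPair, h])
  refine collisions_subset_sdiff (fun u hu => ?_) ?_ ?_
  · simp only [hmem, not_or] at hu
    rw [endPair, endPair, hfix hu.2.1 hu.2.2.1, hfix (flipSlot_involutive.injective.ne hu.1)]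
    rintro rfl
    exact hu.2.2.2 (flipSlot_flipSlot u).symm
  · intro u hu v hv huv
    rw [Finset.mem_coe, hmem] at hu hv
    rcases hu with rfl | rfl | rfl | rfl <;> rcases hv with rfl | rfl | rfl | rfl <;>
      simp only [endPair_flipSlot, hs, ht, Prod.swap_prod_mk, Prod.mk.injEq] at huv <;> grind
  · simp only [hmem]
    rintro c (rfl | rfl | rfl | rfl) u <;>
      simp only [endPair_flipSlot, hs, ht, Prod.swap_prod_mk] <;> symm
    exacts [hsnew u, hswap _ _ hsnew u, htnew u, hswap _ _ htnew u]

lemma exists_card_collisions_swapSlots_lt {σ : Config n k m}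
    (hpos : (collisions (endPair σ)).Nonempty)
    (hm : 3 * k + 2 * k ^ 2 + (collisions (endPair σ)).card < 2 * m) :
    ∃ s t, (collisions (endPair (swapSlots s t σ))).card < (collisions (endPair σ)).card := by
  obtain ⟨s, hs⟩ := hpos
  set a := (σ s).1
  set b := (σ (flipSlot s)).1
  obtain ⟨t, ht⟩ : ∃ t, t ∉ slotsNear σ a ∪ slotsAt σ b ∪ (slotsNear σ b).image flipSlot ∪
      collisions (endPair σ) := by
    by_contra! hall
    have hcard := (Finset.eq_univ_of_forall hall) ▸ Finset.card_union_le (slotsNear σ a ∪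
      slotsAt σ b ∪ (slotsNear σ b).image flipSlot) (collisions (endPair σ))
    have h₁ := Finset.card_union_le (slotsNear σ a ∪ slotsAt σ b) ((slotsNear σ b).image flipSlot)
    have h₂ := Finset.card_union_le (slotsNear σ a) (slotsAt σ b)
    have h₃ := Finset.card_image_le (s := slotsNear σ b) (f := flipSlot)
    have h₄ := card_slotsNear_le σ a
    have h₅ := card_slotsNear_le σ b
    rw [card_slotsAt] at h₂
    rw [Finset.card_univ, Fintype.card_prod, Fintype.card_fin, Fintype.card_bool] at hcard
    omega
  simp only [Finset.mem_union, not_or] at ht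
  obtain ⟨⟨⟨hta, htb⟩, hfb⟩, htc⟩ := ht
  have hfb' : flipSlot t ∉ slotsNear σ b := fun h =>
    hfb (Finset.mem_image.2 ⟨_, h, flipSlot_flipSlot t⟩)
  refine ⟨flipSlot s, t, Finset.card_lt_card
    ((collisions_swapSlots_subset hta htb hfb' htc).trans_ssubset ?_)⟩
  exact (Finset.ssubset_iff_of_subset Finset.sdiff_subset).2 ⟨s, hs, by simp⟩

lemma card_fewBad_succ_le {b : ℕ} (hm : 3 * k + 2 * k ^ 2 + (b + 1) < 2 * m) :
    (fewBad n k m (b + 1)).card ≤ (2 * m) ^ 2 * (fewBad n k m b).card := by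
  have hsub : fewBad n k m (b + 1) ⊆
      (Finset.univ : Finset ((Fin m × Bool) × (Fin m × Bool))).biUnion fun p =>
        (fewBad n k m b).image (swapSlots p.1 p.2) := by
    intro σ hσ
    obtain ⟨s, t, hst⟩ : ∃ s t, swapSlots s t σ ∈ fewBad n k m b := by
      simp only [fewBad, Finset.mem_filter, Finset.mem_univ, true_and] at hσ ⊢
      obtain hempty | hpos := (collisions (endPair σ)).eq_empty_or_nonempty
      · have s : Fin m × Bool := (⟨0, by omega⟩, false)
        exact ⟨s, s, by simp [swapSlots, hempty]⟩
      · obtain ⟨s, t, hlt⟩ := exists_card_collisions_swapSlots_lt hpos (by omega)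
        exact ⟨s, t, by omega⟩
    exact Finset.mem_biUnion.2 ⟨(s, t), Finset.mem_univ _,
      Finset.mem_image.2 ⟨_, hst, swapSlots_involutive s t σ⟩⟩
  refine (Finset.card_le_card hsub).trans ((Finset.card_biUnion_le_card_mul _ _ _
    fun _ _ => Finset.card_image_le).trans_eq ?_)
  simp only [Finset.card_univ, Fintype.card_prod, Fintype.card_fin, Fintype.card_bool]
  ring

lemma card_config_le_mul_card_simple (hm : 7 * (k + 1) ^ 2 ≤ 2 * m) :
    Fintype.card (Config n k m) ≤ 2 * (2 * m) ^ (8 * (k + k ^ 2)) * (fewBad n k m 0).card := by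
  have hdescent : ∀ b ≤ 4 * (k + k ^ 2),
      (fewBad n k m b).card ≤ ((2 * m) ^ 2) ^ b * (fewBad n k m 0).card := by
    intro b
    induction b with
    | zero => simp
    | succ b ih =>
      intro hb
      calc (fewBad n k m (b + 1)).card
          ≤ (2 * m) ^ 2 * (fewBad n k m b).card := card_fewBad_succ_le (by nlinarith)
        _ ≤ (2 * m) ^ 2 * (((2 * m) ^ 2) ^ b * (fewBad n k m 0).card) := by
            gcongr
            exact ih (by omega)
        _ = ((2 * m) ^ 2) ^ (b + 1) * (fewBad n k m 0).card := by ring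
  calc Fintype.card (Config n k m)
      ≤ 2 * (fewBad n k m (4 * (k + k ^ 2))).card :=
        card_config_le_two_mul_fewBad (by have := Nat.one_le_pow 2 (k + 1) k.succ_pos; omega)
    _ ≤ 2 * (((2 * m) ^ 2) ^ (4 * (k + k ^ 2)) * (fewBad n k m 0).card) := by
        gcongr
        exact hdescent _ le_rfl
    _ = 2 * (2 * m) ^ (8 * (k + k ^ 2)) * (fewBad n k m 0).card := by
        rw [← pow_mul, ← mul_assoc]
        congr 3
        ring

end Switching

/-! ### From configurations to regular graphs -/

/-- The adjacency function of the graph obtained from a configuration by forgetting the labels of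
edges and half-edges. -/
def graphOf {n k m : ℕ} (σ : Config n k m) (u v : Fin n) : Bool :=
  decide ((u, v) ∈ Set.range (endPair σ))

/-- The adjacency functions of the simple `k`-regular graphs on `Fin n`. -/
def regGraphs (n k : ℕ) : Finset (Fin n → Fin n → Bool) :=
  Finset.univ.filter (IsRegAdj n k)

/-- The relabellings of the edges and of their orientations. -/
def slotSymmetries (m : ℕ) : Finset (Equiv.Perm (Fin m × Bool)) :=
  Finset.univ.filter fun π => ∀ s, π (flipSlot s) = flipSlot (π s)

/-- The relabellings of the half-edges at each vertex. -/
def halfEdgeSymmetries (n k : ℕ) : Finset (Equiv.Perm (Fin n × Fin k)) :=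
  Finset.univ.filter fun κ => ∀ h, (κ h).1 = h.1

section GraphOf

variable {n k m : ℕ}

@[simp]
lemma mem_regGraphs {g : Fin n → Fin n → Bool} : g ∈ regGraphs n k ↔ IsRegAdj n k g := by
  simp [regGraphs]

@[simp]
lemma mem_edgesOf {g : Fin n → Fin n → Bool} {e : Fin n × Fin n} :
    e ∈ edgesOf g ↔ e.1 < e.2 ∧ g e.1 e.2 = true := by
  simp [edgesOf]

@[simp]
lemma graphOf_eq_true_iff {σ : Config n k m} {u v : Fin n} :
    graphOf σ u v = true ↔ ∃ s, endPair σ s = (u, v) := by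
  simp [graphOf]

lemma graphOf_eq_graphOf_iff {σ τ : Config n k m} :
    graphOf σ = graphOf τ ↔ Set.range (endPair σ) = Set.range (endPair τ) := by
  simp only [funext_iff, graphOf, decide_eq_decide, Set.ext_iff, Prod.forall]

lemma isRegAdj_graphOf {σ : Config n k m} (hσ : Function.Injective (endPair σ)) :
    IsRegAdj n k (graphOf σ) := by
  refine ⟨fun u v => ?_, fun u => ?_, fun u => ?_⟩
  · have hflip (u v : Fin n) : graphOf σ u v = true → graphOf σ v u = true := by
      simp only [graphOf_eq_true_iff]
      exact fun ⟨s, hs⟩ => ⟨flipSlot s, by rw [endPair_flipSlot, hs, Prod.swap_prod_mk]⟩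
    exact Bool.eq_iff_iff.2 ⟨hflip u v, hflip v u⟩
  · rw [Bool.eq_false_iff, ne_eq, graphOf_eq_true_iff]
    rintro ⟨s, hs⟩
    exact flipSlot_ne_self s (hσ (by rw [endPair_flipSlot, hs, Prod.swap_prod_mk]))
  · have himage : (Finset.univ.filter fun v => graphOf σ u v = true) =
        (slotsAt σ u).image fun s => (endPair σ s).2 := by
      ext v
      simp [slotsAt, endPair]
    rw [himage, Finset.card_image_of_injOn, card_slotsAt]
    intro s hs t ht hst
    simp only [slotsAt, Finset.coe_filter, Finset.mem_univ, true_and, Set.mem_ofPred_eq] at hs ht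
    exact hσ (Prod.ext (hs.trans ht.symm) hst)

lemma IsRegAdj.two_mul_card_edgesOf {g : Fin n → Fin n → Bool} (hg : IsRegAdj n k g) :
    2 * (edgesOf g).card = n * k := by
  set darts : Finset (Fin n × Fin n) := Finset.univ.filter fun d => g d.1 d.2 = true with hdarts
  have hdeg : darts.card = n * k := by
    have hrow (u : Fin n) : (Finset.univ.filter fun v => g u v = true).card = k := hg.2.2 u
    simp only [Finset.card_filter] at hrow
    rw [hdarts, Finset.card_filter, Fintype.sum_prod_type]
    simp only [hrow, Finset.sum_const, Finset.card_univ, Fintype.card_fin, smul_eq_mul]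
  have hsplit : darts = edgesOf g ∪ (edgesOf g).map (Equiv.prodComm _ _).toEmbedding := by
    ext ⟨a, b⟩
    have hne : g a b = true → a ≠ b := by
      rintro h rfl
      simp [hg.2.1] at h
    simp only [hdarts, Finset.mem_filter, Finset.mem_univ, true_and, Finset.mem_union,
      mem_edgesOf, Finset.mem_map_equiv, Equiv.prodComm_symm, Equiv.prodComm_apply, Prod.fst_swap,
      Prod.snd_swap, hg.1 b a]
    grind
  rw [← hdeg, hsplit, Finset.card_union_of_disjoint, Finset.card_map, two_mul]
  rw [Finset.disjoint_left]
  rintro ⟨a, b⟩ hab hba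
  simp only [Finset.mem_map_equiv, mem_edgesOf, Equiv.prodComm_symm, Equiv.prodComm_apply,
    Prod.fst_swap, Prod.snd_swap] at hab hba
  exact hab.1.asymm hba.1

lemma IsRegAdj.exists_orientation {g : Fin n → Fin n → Bool} (hg : IsRegAdj n k g)
    (hm : n * k = 2 * m) : ∃ dart : Fin m × Bool → Fin n × Fin n, Function.Injective dart ∧
      (∀ s, dart (flipSlot s) = (dart s).swap) ∧ ∀ u v, g u v = true ↔ ∃ s, dart s = (u, v) := by
  let edge : Fin m ≃ edgesOf g := Finset.equivFinOfCardEq (by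
    have := hg.two_mul_card_edgesOf; omega) |>.symm
  let dart (s : Fin m × Bool) : Fin n × Fin n := cond s.2 (edge s.1).1.swap (edge s.1).1
  have hedge (i : Fin m) := mem_edgesOf.1 (edge i).2
  have hlt (s : Fin m × Bool) : (dart s).1 < (dart s).2 ↔ s.2 = false := by
    obtain ⟨i, rfl | rfl⟩ := s
    · simpa [dart] using (hedge i).1
    · simpa [dart] using (hedge i).1.le
  have hflip (s : Fin m × Bool) : dart (flipSlot s) = (dart s).swap := by
    obtain ⟨i, rfl | rfl⟩ := s <;> rfl
  refine ⟨dart, fun s t hst => ?_, hflip, fun u v => ⟨fun huv => ?_, ?_⟩⟩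
  · have hsnd : s.2 = t.2 := by
      have := (hlt s).symm.trans ((iff_of_eq (by rw [hst])).trans (hlt t))
      cases hs : s.2 <;> cases ht : t.2 <;> simp_all
    obtain ⟨⟨i, b⟩, ⟨j, c⟩⟩ := s, t
    obtain rfl : b = c := hsnd
    have hij : (edge i).1 = (edge j).1 := by
      cases b
      · exact hst
      · exact Prod.swap_injective hst
    rw [edge.injective (Subtype.ext hij)]
  · obtain hlt | rfl | hlt := lt_trichotomy u v
    · exact ⟨(edge.symm ⟨(u, v), mem_edgesOf.2 ⟨hlt, huv⟩⟩, false), by simp [dart]⟩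
    · simp [hg.2.1] at huv
    · exact ⟨(edge.symm ⟨(v, u), mem_edgesOf.2 ⟨hlt, hg.1 v u ▸ huv⟩⟩, true), by simp [dart]⟩
  · rintro ⟨⟨i, rfl | rfl⟩, hs⟩
    · have := (hedge i).2
      rwa [show (edge i).1 = (u, v) from hs] at this
    · have := (hedge i).2
      rwa [show (edge i).1 = (v, u) from Prod.swap_injective hs, hg.1] at this

lemma IsRegAdj.exists_graphOf_eq {g : Fin n → Fin n → Bool} (hg : IsRegAdj n k g)
    (hm : n * k = 2 * m) : ∃ σ : Config n k m, Function.Injective (endPair σ) ∧ graphOf σ = g := by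
  obtain ⟨dart, hinj, hflip, hdart⟩ := hg.exists_orientation hm
  let nbr (u : Fin n) : {v // g u v = true} ≃ Fin k :=
    Fintype.equivFinOfCardEq (by rw [Fintype.card_subtype, hg.2.2 u])
  have hadj (s : Fin m × Bool) : g (dart s).1 (dart s).2 = true := (hdart _ _).2 ⟨s, rfl⟩
  let half (s : Fin m × Bool) : Fin n × Fin k := ((dart s).1, nbr (dart s).1 ⟨(dart s).2, hadj s⟩)
  have hhalf : Function.Injective half := by
    intro s t hst
    obtain ⟨hfst, hsnd⟩ := Prod.mk.inj hst
    refine hinj (Prod.ext hfst ?_)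
    generalize_proofs hs ht at hsnd
    generalize (dart s).1 = a at hfst hs hsnd
    subst hfst
    exact congrArg Subtype.val ((nbr _).injective hsnd)
  let σ : Config n k m := Equiv.ofBijective half
    ((Fintype.bijective_iff_injective_and_card half).2 ⟨hhalf, by simp [hm, mul_comm]⟩)
  have hσ : endPair σ = dart := funext fun s => Prod.ext rfl (by
    change (dart (flipSlot s)).1 = (dart s).2
    rw [hflip, Prod.fst_swap])
  refine ⟨σ, hσ ▸ hinj, funext₂ fun u v => Bool.eq_iff_iff.2 ?_⟩
  rw [graphOf_eq_true_iff, hσ, hdart]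

lemma prod_edgesOf_graphOf {M : Type*} [CommMonoid M] {σ : Config n k m}
    (hσ : Function.Injective (endPair σ)) {f : Fin n × Fin n → M} (hf : ∀ e, f e.swap = f e) :
    ∏ e ∈ edgesOf (graphOf σ), f e = ∏ i, f (endPair σ (i, false)) := by
  -- the slot of the edge `i` from which it is read in increasing direction
  let slot (i : Fin m) : Fin m × Bool :=
    (i, decide ((endPair σ (i, true)).1 < (endPair σ (i, true)).2))
  have hslot (i : Fin m) : endPair σ (slot i) =
      if (endPair σ (i, true)).1 < (endPair σ (i, true)).2 then endPair σ (i, true)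
      else (endPair σ (i, true)).swap := by
    split_ifs with h
    · simp only [slot, h, decide_true]
    · simp only [slot, h, decide_false]
      exact endPair_flipSlot σ (i, true)
  have hne (s : Fin m × Bool) : (endPair σ s).1 ≠ (endPair σ s).2 := fun h =>
    flipSlot_ne_self s (hσ ((endPair_flipSlot σ s).trans (Prod.ext h.symm h)))
  symm
  refine Finset.prod_bij (fun i _ => endPair σ (slot i)) (fun i _ => ?_)
    (fun i _ j _ hij => congrArg Prod.fst (hσ hij)) (fun e he => ?_) (fun i _ => ?_)
  · refine mem_edgesOf.2 ⟨?_, graphOf_eq_true_iff.2 ⟨slot i, rfl⟩⟩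
    rw [hslot]
    split_ifs with h
    exacts [h, (not_lt.1 h).lt_of_ne (hne _).symm]
  · obtain ⟨hlt, hadj⟩ := mem_edgesOf.1 he
    obtain ⟨⟨i, b⟩, rfl : _ = e⟩ := graphOf_eq_true_iff.1 hadj
    refine ⟨i, Finset.mem_univ _, ?_⟩
    cases b
    · have hswap : endPair σ (i, true) = (endPair σ (i, false)).swap :=
        endPair_flipSlot σ (i, false)
      rw [hslot, hswap, if_neg (by simpa using hlt.le), Prod.swap_swap]
    · rw [hslot, if_pos hlt]
  · have hswap : endPair σ (i, false) = (endPair σ (i, true)).swap := endPair_flipSlot σ (i, true)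
    rw [hslot, hswap, hf]
    split_ifs
    exacts [rfl, (hf _).symm]

lemma card_simple_graphOf_eq {σ₀ : Config n k m} (hσ₀ : Function.Injective (endPair σ₀)) :
    ((fewBad n k m 0).filter fun σ => graphOf σ = graphOf σ₀).card =
      (slotSymmetries m).card * (halfEdgeSymmetries n k).card := by
  have hsymm {π : Equiv.Perm (Fin m × Bool)} {κ : Equiv.Perm (Fin n × Fin k)}
      (hπ : π ∈ slotSymmetries m) (hκ : κ ∈ halfEdgeSymmetries n k) :
      endPair ((π.trans σ₀).trans κ) = endPair σ₀ ∘ π := by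
    simp only [slotSymmetries, halfEdgeSymmetries, Finset.mem_filter, Finset.mem_univ,
      true_and] at hπ hκ
    funext s
    simp [endPair, hπ, hκ]
  rw [← Finset.card_product]
  symm
  refine Finset.card_bij (fun p _ => (p.1.trans σ₀).trans p.2) (fun p hp => ?_)
    (fun p hp p' hp' h => ?_) (fun σ hσ => ?_)
  · obtain ⟨hπ, hκ⟩ := Finset.mem_product.1 hp
    rw [Finset.mem_filter, mem_fewBad_zero, graphOf_eq_graphOf_iff, hsymm hπ hκ,
      p.1.surjective.range_comp]
    exact ⟨hσ₀.comp p.1.injective, rfl⟩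
  · obtain ⟨hπ, hκ⟩ := Finset.mem_product.1 hp
    obtain ⟨hπ', hκ'⟩ := Finset.mem_product.1 hp'
    have hfst : p.1 = p'.1 := Equiv.ext fun s => hσ₀ (congrFun (a := s)
      ((hsymm hπ hκ).symm.trans ((congrArg endPair h).trans (hsymm hπ' hκ'))))
    refine Prod.ext hfst (Equiv.ext fun x => ?_)
    simpa [hfst] using Equiv.congr_fun h ((p'.1.trans σ₀).symm x)
  · rw [Finset.mem_filter, mem_fewBad_zero, graphOf_eq_graphOf_iff] at hσ
    obtain ⟨hσ, hrange⟩ := hσ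
    let π : Equiv.Perm (Fin m × Bool) := (Equiv.ofInjective _ hσ).trans
      ((Equiv.setCongr hrange).trans (Equiv.ofInjective _ hσ₀).symm)
    have hπ (s : Fin m × Bool) : endPair σ₀ (π s) = endPair σ s :=
      Equiv.apply_ofInjective_symm hσ₀ ⟨_, hrange ▸ ⟨s, rfl⟩⟩
    refine ⟨(π, (π.trans σ₀).symm.trans σ), Finset.mem_product.2 ⟨?_, ?_⟩,
      Equiv.ext fun s => by simp⟩
    · simp only [slotSymmetries, Finset.mem_filter, Finset.mem_univ, true_and]
      exact fun s => hσ₀ (by rw [hπ, endPair_flipSlot, endPair_flipSlot, hπ])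
    · simp only [halfEdgeSymmetries, Finset.mem_filter, Finset.mem_univ, true_and]
      intro h
      obtain ⟨s, rfl⟩ := (π.trans σ₀).surjective h
      simpa [endPair] using (congrArg Prod.fst (hπ s)).symm

lemma expect_comp_eq_of_card_fiber_eq {α β : Type*} [DecidableEq β] {s : Finset α}
    {t : Finset β} {φ : α → β} (hφ : Set.MapsTo φ s t) {c : ℕ} (hc : c ≠ 0)
    (hcard : ∀ b ∈ t, (s.filter (φ · = b)).card = c) (f : β → ℝ) :
    𝔼 a ∈ s, f (φ a) = 𝔼 b ∈ t, f b := by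
  have hs : s.card = t.card * c := by
    rw [Finset.card_eq_sum_card_fiberwise hφ, Finset.sum_congr rfl hcard, Finset.sum_const,
      smul_eq_mul]
  have hsum : ∑ a ∈ s, f (φ a) = c * ∑ b ∈ t, f b := by
    rw [← Finset.sum_fiberwise_of_maps_to hφ, Finset.mul_sum]
    refine Finset.sum_congr rfl fun b hb => ?_
    rw [Finset.sum_congr rfl fun a ha => congrArg f (Finset.mem_filter.1 ha).2, Finset.sum_const,
      hcard b hb, nsmul_eq_mul]
  rw [Finset.expect_eq_sum_div_card, Finset.expect_eq_sum_div_card, hsum, hs, Nat.cast_mul,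
    mul_comm (t.card : ℝ), mul_div_mul_left _ _ (Nat.cast_ne_zero.2 hc)]

lemma expect_regGraphs_eq (hm : n * k = 2 * m) (f : (Fin n → Fin n → Bool) → ℝ) :
    𝔼 g ∈ regGraphs n k, f g = 𝔼 σ ∈ fewBad n k m 0, f (graphOf σ) := by
  have hslot : (slotSymmetries m).card ≠ 0 :=
    (Finset.card_pos.2 ⟨1, by simp [slotSymmetries]⟩).ne'
  have hhalf : (halfEdgeSymmetries n k).card ≠ 0 :=
    (Finset.card_pos.2 ⟨1, by simp [halfEdgeSymmetries]⟩).ne'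
  refine (expect_comp_eq_of_card_fiber_eq (fun σ hσ => ?_) (mul_ne_zero hslot hhalf) ?_ f).symm
  · exact mem_regGraphs.2 (isRegAdj_graphOf (mem_fewBad_zero.1 hσ))
  · intro g hg
    obtain ⟨σ₀, hσ₀, rfl⟩ := (mem_regGraphs.1 hg).exists_graphOf_eq hm
    exact card_simple_graphOf_eq hσ₀

lemma expect_regGraphs_le (hnk : n * k = 2 * m) (hm : 7 * (k + 1) ^ 2 ≤ 2 * m)
    {f : (Fin n → Fin n → Bool) → ℝ} {F : Config n k m → ℝ} (hF : ∀ σ, 0 ≤ F σ)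
    (hfF : ∀ σ, Function.Injective (endPair σ) → f (graphOf σ) = F σ) :
    𝔼 g ∈ regGraphs n k, f g ≤ 2 * (2 * m) ^ (8 * (k + k ^ 2)) * 𝔼 σ, F σ := by
  have : Nonempty (Config n k m) := ⟨Fintype.equivOfCardEq (by simp [hnk, mul_comm])⟩
  set A : ℝ := 2 * (2 * m) ^ (8 * (k + k ^ 2)) with hA
  have hcard : (Fintype.card (Config n k m) : ℝ) ≤ A * (fewBad n k m 0).card := by
    rw [hA]
    exact_mod_cast card_config_le_mul_card_simple hm
  have hconfig : (0 : ℝ) < Fintype.card (Config n k m) := by exact_mod_cast Fintype.card_pos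
  have hsimple : (0 : ℝ) < (fewBad n k m 0).card :=
    pos_of_mul_pos_right (hconfig.trans_le hcard) (by positivity)
  have hmean : 0 ≤ 𝔼 σ, F σ := Finset.expect_nonneg fun σ _ => hF σ
  calc 𝔼 g ∈ regGraphs n k, f g
      = (∑ σ ∈ fewBad n k m 0, F σ) / (fewBad n k m 0).card := by
        rw [expect_regGraphs_eq hnk, Finset.expect_eq_sum_div_card]
        congr 1
        exact Finset.sum_congr rfl fun σ hσ => hfF σ (mem_fewBad_zero.1 hσ)
    _ ≤ (Fintype.card (Config n k m) * 𝔼 σ, F σ) / (fewBad n k m 0).card := by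
        rw [← nsmul_eq_mul, Fintype.card_smul_expect]
        gcongr
        exacts [fun σ _ _ => hF σ, Finset.subset_univ _]
    _ ≤ (A * (fewBad n k m 0).card * 𝔼 σ, F σ) / (fewBad n k m 0).card := by gcongr
    _ = A * 𝔼 σ, F σ := by field_simp

end GraphOf

/-! ### First moments of edge products over regular graphs -/

/-- The number of vertices of colour `x`. -/
def colorCount {X : Type*} {n : ℕ} (ψ : Fin n → X) (x : X) : ℕ :=
  (Finset.univ.filter fun u => ψ u = x).card

/-- The factor lost when half-edges of random regular graphs on `m` edges are replaced by
independent ones carrying `q` possible colours: the first part is the cost of simplicity and the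
second one that of conditioning on the number of half-edges of each colour. -/
def polyLoss (k q m : ℕ) : ℝ :=
  2 * (2 * m : ℝ) ^ (8 * (k + k ^ 2)) * (Real.exp 1 * (2 * m + 1)) ^ q

lemma card_equiv_comp_eq_le {S H X : Type*} [Fintype S] [Fintype H] [Fintype X] [DecidableEq S]
    [DecidableEq H] [DecidableEq X] (κ : H → X) (c : S → X) :
    (Finset.univ.filter fun σ : S ≃ H => κ ∘ σ = c).card
      ≤ ∏ x, (Finset.univ.filter fun h => κ h = x).card.factorial := by
  rcases (Finset.univ.filter fun σ : S ≃ H => κ ∘ σ = c).eq_empty_or_nonempty with h | ⟨σ₀, h₀⟩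
  · simp only [h, Finset.card_empty, zero_le]
  · have hstab := DomMulAct.stabilizer_card κ
    simp only [Fintype.card_subtype] at hstab
    rw [← hstab]
    refine Finset.card_le_card_of_injOn (fun σ => σ₀.symm.trans σ) (fun σ hσ => ?_)
      fun σ _ τ _ h => Equiv.ext fun s => ?_
    · simp only [Finset.coe_filter, Finset.mem_univ, true_and, Set.mem_ofPred_eq,
        Finset.mem_filter] at hσ h₀ ⊢
      funext h
      simpa using congrFun (hσ.trans h₀.symm) (σ₀.symm h)
    · simpa using congrArg (fun e : Equiv.Perm H => e (σ₀ s)) h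

lemma sum_prod_pair_eq_pow {X : Type*} [Fintype X] (m : ℕ) (w : X → X → ℝ) :
    ∑ c : Fin m × Bool → X, ∏ i, w (c (i, false)) (c (i, true)) = (∑ x, ∑ y, w x y) ^ m := by
  have hpair : ∑ x, ∑ y, w x y = ∑ b : Bool → X, w (b false) (b true) := by
    rw [← Fintype.sum_prod_type']
    exact (Fintype.sum_equiv (Equiv.boolArrowEquivProd X) _ _ fun b => rfl).symm
  rw [hpair, Fintype.sum_pow]
  exact Fintype.sum_equiv (Equiv.curry (Fin m) Bool X) _ _ fun c => rfl

lemma sum_equiv_prod_le {H X : Type*} [Fintype H] [Fintype X] [DecidableEq H] [DecidableEq X]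
    {m : ℕ} (κ : H → X) {w : X → X → ℝ} (hw : ∀ x y, 0 ≤ w x y) :
    ∑ σ : (Fin m × Bool) ≃ H, ∏ i, w (κ (σ (i, false))) (κ (σ (i, true)))
      ≤ (∏ x, ((Finset.univ.filter fun h => κ h = x).card.factorial : ℝ)) *
        (∑ x, ∑ y, w x y) ^ m := by
  have hfiber : ∑ σ : (Fin m × Bool) ≃ H, ∏ i, w (κ (σ (i, false))) (κ (σ (i, true)))
      = ∑ c : Fin m × Bool → X,
          ∑ σ ∈ Finset.univ.filter fun σ : (Fin m × Bool) ≃ H => κ ∘ σ = c,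
            ∏ i, w (c (i, false)) (c (i, true)) := by
    rw [← Finset.sum_fiberwise _ (fun σ : (Fin m × Bool) ≃ H => κ ∘ σ)]
    refine Finset.sum_congr rfl fun c _ => Finset.sum_congr rfl fun σ hσ => ?_
    rw [← (Finset.mem_filter.1 hσ).2]
    rfl
  rw [hfiber, ← sum_prod_pair_eq_pow, Finset.mul_sum]
  refine Finset.sum_le_sum fun c _ => ?_
  rw [Finset.sum_const, nsmul_eq_mul]
  exact mul_le_mul_of_nonneg_right (by exact_mod_cast card_equiv_comp_eq_le κ c)
    (Finset.prod_nonneg fun i _ => hw _ _)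

lemma factorial_le_exp_mul_self_mul_pow {N : ℕ} (hN : N ≠ 0) :
    (N.factorial : ℝ) ≤ Real.exp 1 * N * (N / Real.exp 1) ^ N := by
  obtain ⟨M, rfl⟩ := Nat.exists_eq_succ_of_ne_zero hN
  have hstirling : Stirling.stirlingSeq M.succ ≤ Real.exp 1 / √2 := by
    rw [← Stirling.stirlingSeq_one]
    exact Stirling.stirlingSeq'_antitone (Nat.zero_le M)
  have hpos : (0 : ℝ) < M.succ := by positivity
  rw [Stirling.stirlingSeq, div_le_iff₀ (by positivity), Real.sqrt_mul zero_le_two] at hstirling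
  calc (M.succ.factorial : ℝ)
      ≤ Real.exp 1 * √M.succ * (M.succ / Real.exp 1) ^ M.succ :=
        hstirling.trans_eq (by field_simp)
    _ ≤ Real.exp 1 * M.succ * (M.succ / Real.exp 1) ^ M.succ := by
        gcongr
        exact (Real.sqrt_le_left hpos.le).2
          (le_self_pow₀ (by exact_mod_cast M.succ_pos) two_ne_zero)

lemma prod_factorial_div_le {X : Type*} [Fintype X] {a : X → ℕ} {N : ℕ} (hN : ∑ x, a x = N)
    {ρ : ℝ} (hρ : 0 ≤ ρ) (ha : ∀ x, (a x : ℝ) ≤ ρ * N) :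
    (∏ x, ((a x).factorial : ℝ)) / N.factorial
      ≤ (Real.exp 1 * (N + 1)) ^ Fintype.card X * ρ ^ N := by
  have hfactorial : ∀ x, ((a x).factorial : ℝ) ≤
      Real.exp 1 * (N + 1) * (ρ * N / Real.exp 1) ^ a x := by
    intro x
    rcases eq_or_ne (a x) 0 with h | h
    · simp only [h, Nat.factorial_zero, Nat.cast_one, pow_zero, mul_one]
      exact one_le_mul_of_one_le_of_one_le (Real.one_le_exp zero_le_one) (by simp)
    · have haN : (a x : ℝ) ≤ N + 1 := by
        rw [← hN]
        exact_mod_cast (Finset.single_le_sum (fun i _ => Nat.zero_le (a i))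
          (Finset.mem_univ x)).trans (Nat.le_succ _)
      refine (factorial_le_exp_mul_self_mul_pow h).trans ?_
      have := ha x
      gcongr
  have hpow : (N / Real.exp 1) ^ N ≤ (N.factorial : ℝ) := by
    rw [div_pow, ← Real.exp_nat_mul, mul_one, div_le_comm₀ (Real.exp_pos _) (by positivity)]
    exact Real.pow_div_factorial_le_exp N (Nat.cast_nonneg N) N
  rw [div_le_iff₀ (by positivity)]
  calc ∏ x, ((a x).factorial : ℝ)
      ≤ ∏ x, (Real.exp 1 * (N + 1) * (ρ * N / Real.exp 1) ^ a x) :=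
        Finset.prod_le_prod (fun x _ => Nat.cast_nonneg _) fun x _ => hfactorial x
    _ = (Real.exp 1 * (N + 1)) ^ Fintype.card X * ρ ^ N * (N / Real.exp 1) ^ N := by
        rw [Finset.prod_mul_distrib, Finset.prod_const, Finset.prod_pow_eq_pow_sum, hN,
          Finset.card_univ, mul_div_assoc, mul_pow ρ, mul_assoc]
    _ ≤ _ := by gcongr

section Colors

variable {X : Type*} [Fintype X] {n k m : ℕ}

lemma sum_colorCount (ψ : Fin n → X) : ∑ x, colorCount ψ x = n := by
  simpa [colorCount] using (Finset.card_eq_sum_card_fiberwise (f := ψ) (s := Finset.univ)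
    (t := Finset.univ) fun _ _ => Finset.mem_coe.2 (Finset.mem_univ _)).symm

lemma expect_config_prod_le (hnk : n * k = 2 * m) (ψ : Fin n → X) {w : X → X → ℝ}
    (hw : ∀ x y, 0 ≤ w x y) :
    𝔼 σ : Config n k m, ∏ i, w (ψ (σ (i, false)).1) (ψ (σ (i, true)).1) ≤
      (∏ x, ((k * colorCount ψ x).factorial : ℝ)) / (2 * m).factorial *
        (∑ x, ∑ y, w x y) ^ m := by
  have hcard : Fintype.card (Config n k m) = (2 * m).factorial := by
    rw [Fintype.card_equiv (Fintype.equivOfCardEq (by simp [hnk, mul_comm]))]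
    simp [mul_comm]
  have hcolor : ∀ x, (Finset.univ.filter fun h : Fin n × Fin k => ψ h.1 = x).card =
      k * colorCount ψ x := by
    intro x
    have : (Finset.univ.filter fun h : Fin n × Fin k => ψ h.1 = x) =
        (Finset.univ.filter fun u => ψ u = x) ×ˢ Finset.univ := by
      ext h
      simp
    rw [this, Finset.card_product, Finset.card_univ, Fintype.card_fin, mul_comm, colorCount]
  have hsum := sum_equiv_prod_le (m := m) (fun h : Fin n × Fin k => ψ h.1) hw
  simp only [hcolor] at hsum
  rw [Fintype.expect_eq_sum_div_card, hcard, div_mul_eq_mul_div]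
  exact div_le_div_of_nonneg_right hsum (by positivity)

lemma expect_regGraphs_prod_le (hnk : n * k = 2 * m) (hm : 7 * (k + 1) ^ 2 ≤ 2 * m)
    {ψ : Fin n → X} {ρ : ℝ} (hρ : 0 ≤ ρ) (hψ : ∀ x, (colorCount ψ x : ℝ) ≤ ρ * n)
    {w : X → X → ℝ} (hw : ∀ x y, 0 ≤ w x y) (hsymm : ∀ x y, w x y = w y x) :
    𝔼 g ∈ regGraphs n k, ∏ e ∈ edgesOf g, w (ψ e.1) (ψ e.2) ≤
      polyLoss k (Fintype.card X) m * (ρ ^ 2 * ∑ x, ∑ y, w x y) ^ m := by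
  have hW : 0 ≤ ∑ x, ∑ y, w x y :=
    Finset.sum_nonneg fun x _ => Finset.sum_nonneg fun y _ => hw x y
  have hfactorial := prod_factorial_div_le (a := fun x => k * colorCount ψ x) (N := 2 * m)
    (by rw [← Finset.mul_sum, sum_colorCount, mul_comm, hnk]) hρ fun x => by
      rw [← hnk]
      push_cast
      calc (k : ℝ) * colorCount ψ x ≤ k * (ρ * n) := by gcongr; exact hψ x
        _ = ρ * (n * k) := by ring
  push_cast at hfactorial
  calc 𝔼 g ∈ regGraphs n k, ∏ e ∈ edgesOf g, w (ψ e.1) (ψ e.2)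
      ≤ 2 * (2 * m) ^ (8 * (k + k ^ 2)) *
          𝔼 σ : Config n k m, ∏ i, w (ψ (σ (i, false)).1) (ψ (σ (i, true)).1) :=
        expect_regGraphs_le hnk hm (fun σ => Finset.prod_nonneg fun i _ => hw _ _)
          fun σ hσ => prod_edgesOf_graphOf hσ fun e => hsymm _ _
    _ ≤ 2 * (2 * m) ^ (8 * (k + k ^ 2)) *
          ((Real.exp 1 * (2 * m + 1)) ^ Fintype.card X * ρ ^ (2 * m) *
            (∑ x, ∑ y, w x y) ^ m) := by
        gcongr
        exact (expect_config_prod_le hnk ψ hw).trans (by gcongr)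
    _ = polyLoss k (Fintype.card X) m * (ρ ^ 2 * ∑ x, ∑ y, w x y) ^ m := by
        rw [polyLoss, mul_pow (ρ ^ 2), ← pow_mul ρ]
        ring

end Colors

/-! ### Markov's inequality for the observation model -/

lemma sum_piFinset_prod {ι β : Type*} [Fintype ι] [Fintype β] [DecidableEq ι] (s : Finset ι)
    (b₀ : β) (f : ι → β → ℝ) :
    ∑ y ∈ Fintype.piFinset (fun i => if i ∈ s then Finset.univ else {b₀}), ∏ i ∈ s, f i (y i) =
      ∏ i ∈ s, ∑ b, f i b := by
  simp only [← Fintype.prod_ite_mem s]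
  rw [← Finset.prod_univ_sum _ fun i b => if i ∈ s then f i b else 1]
  exact Finset.prod_congr rfl fun i _ => by split_ifs <;> simp

lemma mul_sum_filter_le_sum_mul {ι : Type*} (s : Finset ι) {p F : ι → ℝ} (hp : ∀ i, 0 ≤ p i)
    (hF : ∀ i, 0 ≤ F i) {a : ℝ} : a * ∑ i ∈ s with a ≤ F i, p i ≤ ∑ i ∈ s, p i * F i := by
  rw [Finset.mul_sum]
  refine (Finset.sum_le_sum fun i hi => ?_).trans (Finset.sum_le_sum_of_subset_of_nonneg
    (Finset.filter_subset _ _) fun i _ _ => mul_nonneg (hp i) (hF i))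
  rw [mul_comm]
  exact mul_le_mul_of_nonneg_left (Finset.mem_filter.1 hi).2 (hp i)

namespace RegSpace.IsRegModel

variable {X Y' : Type*} [Fintype X] [Fintype Y'] {Q : X → X → Y' → ℝ} {n k : ℕ}
  {M : RegSpace X Y' n}

lemma ae_isRegAdj (hM : M.IsRegModel Q k) : ∀ᵐ ω ∂M.P, IsRegAdj n k (M.G ω) := by
  obtain ⟨_, -, hG, -, -, hreg, -⟩ := hM
  exact (mem_ae_iff_prob_eq_one (hG (t := {g | IsRegAdj n k g}) trivial)).2 hreg

lemma exists_isRegAdj (hM : M.IsRegModel Q k) : ∃ g : Fin n → Fin n → Bool, IsRegAdj n k g := by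
  have := hM.1
  obtain ⟨ω, hω⟩ := hM.ae_isRegAdj.exists
  exact ⟨M.G ω, hω⟩

lemma measureReal_cylinder (hM : M.IsRegModel Q k) {g : Fin n → Fin n → Bool}
    (hg : g ∈ regGraphs n k) (θ : Fin n → X) (y : Fin n × Fin n → Y') :
    M.P.real {ω | M.G ω = g ∧ M.θ0 ω = θ ∧ ∀ e ∈ edgesOf g, M.Yobs e ω = y e} =
      ((regGraphs n k).card : ℝ)⁻¹ * ((Fintype.card X : ℝ)⁻¹) ^ n *
        ∏ e ∈ edgesOf g, Q (θ e.1) (θ e.2) (y e) := by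
  obtain ⟨-, -, -, -, -, -, hlaw⟩ := hM
  rw [measureReal_def, hlaw g (mem_regGraphs.1 hg) θ (edgesOf g) (fun _ => id) y,
    Nat.card_eq_fintype_card, Fintype.card_subtype, regGraphs]

lemma measureReal_le_sum_cylinder (hM : M.IsRegModel Q k) (b₀ : Y')
    {R : (Fin n → Fin n → Bool) → (Fin n → X) → (Fin n × Fin n → Y') → Prop}
    (hR : ∀ g θ y y', (∀ e ∈ edgesOf g, y e = y' e) → R g θ y → R g θ y') :
    M.P.real {ω | R (M.G ω) (M.θ0 ω) fun e => M.Yobs e ω} ≤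
      ∑ g ∈ regGraphs n k, ∑ θ,
        ∑ y ∈ Fintype.piFinset (fun e => if e ∈ edgesOf g then Finset.univ else {b₀}) with R g θ y,
          M.P.real {ω | M.G ω = g ∧ M.θ0 ω = θ ∧ ∀ e ∈ edgesOf g, M.Yobs e ω = y e} := by
  have := hM.1
  have hcover : {ω | R (M.G ω) (M.θ0 ω) fun e => M.Yobs e ω} ≤ᵐ[M.P]
      ⋃ g ∈ regGraphs n k, ⋃ θ ∈ Finset.univ, ⋃ y ∈ (Fintype.piFinset fun e =>
        if e ∈ edgesOf g then Finset.univ else {b₀}).filter (R g θ),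
        {ω | M.G ω = g ∧ M.θ0 ω = θ ∧ ∀ e ∈ edgesOf g, M.Yobs e ω = y e} := by
    filter_upwards [hM.ae_isRegAdj] with ω hreg hω
    refine Set.mem_iUnion₂.2 ⟨M.G ω, mem_regGraphs.2 hreg, Set.mem_iUnion₂.2
      ⟨M.θ0 ω, Finset.mem_univ _, Set.mem_iUnion₂.2
      ⟨fun e => if e ∈ edgesOf (M.G ω) then M.Yobs e ω else b₀,
      Finset.mem_filter.2 ⟨Fintype.mem_piFinset.2 fun e => ?_, hR _ _ _ _ (fun e he => ?_) hω⟩,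
      rfl, rfl, fun e he => ?_⟩⟩⟩
    · split_ifs <;> simp
    · exact (if_pos he).symm
    · exact (if_pos he).symm
  refine (ENNReal.toReal_mono (measure_ne_top _ _) (measure_mono_ae hcover)).trans ?_
  refine (measureReal_biUnion_finset_le _ _).trans (Finset.sum_le_sum fun g _ => ?_)
  refine (measureReal_biUnion_finset_le _ _).trans (Finset.sum_le_sum fun θ _ => ?_)
  exact measureReal_biUnion_finset_le _ _

lemma mul_measureReal_le_expect_prod [Nonempty Y'] (hM : M.IsRegModel Q k)
    {φ : (Fin n → X) → Fin n × Fin n → Y' → ℝ}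
    (hφ : ∀ θ e b, 0 ≤ φ θ e b) {a : ℝ} (ha : 0 ≤ a) :
    a * M.P.real {ω | a ≤ ∏ e ∈ edgesOf (M.G ω), φ (M.θ0 ω) e (M.Yobs e ω)} ≤
      𝔼 g ∈ regGraphs n k, 𝔼 θ : Fin n → X, ∏ e ∈ edgesOf g,
        ∑ b, Q (θ e.1) (θ e.2) b * φ θ e b := by
  let b₀ := Classical.arbitrary Y'
  set c : ℝ := ((regGraphs n k).card : ℝ)⁻¹ * ((Fintype.card X : ℝ)⁻¹) ^ n with hc
  have hunion := hM.measureReal_le_sum_cylinder b₀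
    (R := fun g θ y => a ≤ ∏ e ∈ edgesOf g, φ θ e (y e)) fun g θ y y' hy hle =>
      hle.trans_eq (Finset.prod_congr rfl fun e he => by rw [hy e he])
  have hmarkov : ∀ g ∈ regGraphs n k, ∀ θ, a * ∑ y ∈ Fintype.piFinset (fun e =>
      if e ∈ edgesOf g then Finset.univ else {b₀}) with a ≤ ∏ e ∈ edgesOf g, φ θ e (y e),
        M.P.real {ω | M.G ω = g ∧ M.θ0 ω = θ ∧ ∀ e ∈ edgesOf g, M.Yobs e ω = y e} ≤
      c * ∏ e ∈ edgesOf g, ∑ b, Q (θ e.1) (θ e.2) b * φ θ e b := by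
    intro g hg θ
    refine (mul_sum_filter_le_sum_mul _ (fun _ => measureReal_nonneg)
      fun y => Finset.prod_nonneg fun e _ => hφ θ e (y e)).trans_eq ?_
    simp only [hM.measureReal_cylinder hg, ← hc, ← sum_piFinset_prod _ b₀, Finset.mul_sum,
      Finset.prod_mul_distrib, mul_assoc]
  calc a * M.P.real {ω | a ≤ ∏ e ∈ edgesOf (M.G ω), φ (M.θ0 ω) e (M.Yobs e ω)}
      ≤ ∑ g ∈ regGraphs n k, ∑ θ : Fin n → X,
          c * ∏ e ∈ edgesOf g, ∑ b, Q (θ e.1) (θ e.2) b * φ θ e b := by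
        refine (mul_le_mul_of_nonneg_left hunion ha).trans ?_
        rw [Finset.mul_sum]
        refine Finset.sum_le_sum fun g hg => ?_
        rw [Finset.mul_sum]
        exact Finset.sum_le_sum fun θ _ => hmarkov g hg θ
    _ = 𝔼 g ∈ regGraphs n k, 𝔼 θ : Fin n → X, ∏ e ∈ edgesOf g,
          ∑ b, Q (θ e.1) (θ e.2) b * φ θ e b := by
        simp only [Finset.expect_eq_sum_div_card, Finset.sum_div, Finset.card_univ,
          Fintype.card_fun, Fintype.card_fin, Nat.cast_pow, hc]
        refine Finset.sum_congr rfl fun g _ => Finset.sum_congr rfl fun θ _ => ?_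
        rw [inv_pow, div_div, div_eq_inv_mul, mul_inv_rev]

end RegSpace.IsRegModel

/-! ### Exponential moments under bounded differences -/

lemma exp_le_one_add_add_sq {t : ℝ} (ht : |t| ≤ 1) : Real.exp t ≤ 1 + t + t ^ 2 := by
  linarith [(abs_le.1 (Real.abs_exp_sub_one_sub_id_le ht)).2]

lemma sum_mul_exp_le {ι : Type*} [Fintype ι] {p f : ι → ℝ} (hp : ∀ i, 0 ≤ p i)
    (hp1 : ∑ i, p i = 1) {c : ℝ} (hc : c ≤ 1) (hf : ∀ i, |f i| ≤ c) :
    ∑ i, p i * Real.exp (f i) ≤ Real.exp (∑ i, p i * f i + c ^ 2) :=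
  calc ∑ i, p i * Real.exp (f i) ≤ ∑ i, p i * (1 + f i + c ^ 2) := by
        refine Finset.sum_le_sum fun i _ => mul_le_mul_of_nonneg_left ?_ (hp i)
        have hsq : f i ^ 2 ≤ c ^ 2 := sq_le_sq' (abs_le.1 (hf i)).1 (abs_le.1 (hf i)).2
        linarith [exp_le_one_add_add_sq ((hf i).trans hc)]
    _ = ∑ i, p i * f i + c ^ 2 + 1 := by
        simp only [mul_add, Finset.sum_add_distrib, ← Finset.sum_mul, hp1]
        ring
    _ ≤ Real.exp (∑ i, p i * f i + c ^ 2) := Real.add_one_le_exp _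

lemma expect_fin_succ_fun {X : Type*} [Fintype X] {n : ℕ} (f : (Fin (n + 1) → X) → ℝ) :
    𝔼 θ, f θ = 𝔼 θ : Fin n → X, 𝔼 x, f (Fin.cons x θ) := by
  rw [Finset.expect_comm, ← Finset.expect_product', Finset.univ_product_univ]
  exact (Fintype.expect_equiv (Fin.consEquiv fun _ => X) _ _ fun _ => rfl).symm

section BoundedDifferences

variable {X : Type*} [Fintype X] [Nonempty X] {c : ℝ}

lemma expect_exp_le_of_abs_sub_expect_le {f : X → ℝ} (hc : c ≤ 1)
    (hf : ∀ x, |f x - 𝔼 y, f y| ≤ c) : 𝔼 x, Real.exp (f x) ≤ Real.exp (𝔼 x, f x + c ^ 2) := by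
  set μ := 𝔼 y, f y with hμ
  have hq : (Fintype.card X : ℝ) ≠ 0 := by exact_mod_cast Fintype.card_ne_zero
  have hcentered : ∑ x, (Fintype.card X : ℝ)⁻¹ * (f x - μ) = 0 := by
    rw [← Finset.mul_sum, Finset.sum_sub_distrib, Finset.sum_const, Finset.card_univ,
      nsmul_eq_mul, hμ, Fintype.expect_eq_sum_div_card, mul_div_cancel₀ _ hq, sub_self, mul_zero]
  calc 𝔼 x, Real.exp (f x)
      = Real.exp μ * ∑ x, (Fintype.card X : ℝ)⁻¹ * Real.exp (f x - μ) := by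
        simp only [Fintype.expect_eq_sum_div_card, Finset.mul_sum,
          mul_left_comm (Real.exp μ), ← Real.exp_add, add_sub_cancel, div_eq_inv_mul]
    _ ≤ Real.exp μ * Real.exp (∑ x, (Fintype.card X : ℝ)⁻¹ * (f x - μ) + c ^ 2) := by
        gcongr
        exact sum_mul_exp_le (fun _ => by positivity) (by simp [hq]) hc hf
    _ = Real.exp (μ + c ^ 2) := by rw [hcentered, zero_add, ← Real.exp_add]

lemma expect_exp_le_of_bounded_diff (hc : c ≤ 1) {n : ℕ} {f : (Fin n → X) → ℝ}
    (hf : ∀ θ v x, |f (Function.update θ v x) - f θ| ≤ c) :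
    𝔼 θ, Real.exp (f θ) ≤ Real.exp (𝔼 θ, f θ + n * c ^ 2) := by
  induction n with
  | zero => simp [Finset.univ_unique]
  | succ n ih =>
    set h : (Fin n → X) → ℝ := fun θ => 𝔼 x, f (Fin.cons x θ) with hh
    have hdev : ∀ θ x, |f (Fin.cons x θ) - h θ| ≤ c := by
      intro θ x
      rw [← Fintype.expect_const (ι := X) (f (Fin.cons x θ)), hh, ← Finset.expect_sub_distrib]
      refine (Finset.abs_expect_le _ _).trans (Finset.expect_le Finset.univ_nonempty fun y _ => ?_)
      simpa only [Fin.update_cons_zero] using hf (Fin.cons y θ) 0 x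
    have hdiff : ∀ θ v x, |h (Function.update θ v x) - h θ| ≤ c := by
      intro θ v x
      rw [hh, ← Finset.expect_sub_distrib]
      refine (Finset.abs_expect_le _ _).trans (Finset.expect_le Finset.univ_nonempty fun y _ => ?_)
      simpa only [Fin.cons_update] using hf (Fin.cons y θ) v.succ x
    calc 𝔼 θ, Real.exp (f θ) = 𝔼 θ : Fin n → X, 𝔼 x, Real.exp (f (Fin.cons x θ)) :=
          expect_fin_succ_fun _
      _ ≤ 𝔼 θ, Real.exp (h θ + c ^ 2) := Finset.expect_le_expect fun θ _ =>
          expect_exp_le_of_abs_sub_expect_le hc (hdev θ)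
      _ = (𝔼 θ, Real.exp (h θ)) * Real.exp (c ^ 2) := by
          simp only [Real.exp_add, Finset.expect_mul]
      _ ≤ Real.exp (𝔼 θ, h θ + n * c ^ 2) * Real.exp (c ^ 2) := by
          gcongr
          exact ih hdiff
      _ = Real.exp (𝔼 θ, f θ + (n + 1 : ℕ) * c ^ 2) := by
          rw [← Real.exp_add, expect_fin_succ_fun f, Nat.cast_succ, add_one_mul, add_assoc]

lemma expect_apply {ι : Type*} [Fintype ι] [DecidableEq ι] (i : ι) (f : X → ℝ) :
    𝔼 θ : ι → X, f (θ i) = 𝔼 x, f x := by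
  refine (Fintype.expect_equiv (Equiv.funSplitAt i X) _ (fun p => f p.1) fun _ => rfl).trans ?_
  rw [← Finset.univ_product_univ, Finset.expect_product]
  simp only [Fintype.expect_const]

lemma expect_apply_apply {ι : Type*} [Fintype ι] [DecidableEq ι] {i j : ι} (hij : i ≠ j)
    (f : X → X → ℝ) : 𝔼 θ : ι → X, f (θ i) (θ j) = 𝔼 x, 𝔼 y, f x y := by
  refine (Fintype.expect_equiv (Equiv.funSplitAt i X) _ (fun p => f p.1 (p.2 ⟨j, hij.symm⟩))
    fun _ => rfl).trans ?_
  rw [← Finset.univ_product_univ, Finset.expect_product]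
  exact Finset.expect_congr rfl fun x _ => expect_apply (⟨j, hij.symm⟩ : {j // j ≠ i}) (f x)

end BoundedDifferences

/-! ### Typicality of the true labels -/

section Typicality

variable {X Y' : Type*} {Q : X → X → Y' → ℝ} {n k : ℕ}

lemma IsRegAdj.card_filter_incident_le {g : Fin n → Fin n → Bool} (hg : IsRegAdj n k g)
    (v : Fin n) : ((edgesOf g).filter fun e => e.1 = v ∨ e.2 = v).card ≤ k := by
  rw [← hg.2.2 v]
  refine Finset.card_le_card_of_injOn (fun e => if e.1 = v then e.2 else e.1) ?_ ?_
  · rintro ⟨a, b⟩ he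
    obtain ⟨⟨hlt, hab⟩, rfl | rfl⟩ :
        (a < b ∧ g a b = true) ∧ (a = v ∨ b = v) := by simpa using he
    · simpa using hab
    · simpa [hlt.ne, hg.1 b a] using hab
  · rintro ⟨a, b⟩ he ⟨a', b'⟩ he' h
    simp only [Finset.coe_filter, mem_edgesOf, Set.mem_ofPred_eq] at he he' h
    grind

lemma IsRegAdj.abs_sum_edgesOf_update_sub_le {g : Fin n → Fin n → Bool} (hg : IsRegAdj n k g)
    {f : X → X → ℝ} {c : ℝ} (hf : ∀ x y x' y', |f x y - f x' y'| ≤ c) (θ : Fin n → X) (v : Fin n)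
    (x : X) :
    |∑ e ∈ edgesOf g, f (Function.update θ v x e.1) (Function.update θ v x e.2) -
      ∑ e ∈ edgesOf g, f (θ e.1) (θ e.2)| ≤ c * k := by
  have hc : 0 ≤ c := (abs_nonneg _).trans (hf x x x x)
  rw [← Finset.sum_sub_distrib]
  calc |∑ e ∈ edgesOf g, (f (Function.update θ v x e.1) (Function.update θ v x e.2) -
          f (θ e.1) (θ e.2))|
      ≤ ∑ e ∈ edgesOf g, if e.1 = v ∨ e.2 = v then c else 0 := by
        refine (Finset.abs_sum_le_sum_abs _ _).trans (Finset.sum_le_sum fun e _ => ?_)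
        split_ifs with hv
        · exact hf _ _ _ _
        · push Not at hv
          rw [Function.update_of_ne hv.1, Function.update_of_ne hv.2, sub_self, abs_zero]
    _ = c * ((edgesOf g).filter fun e => e.1 = v ∨ e.2 = v).card := by
        rw [← Finset.sum_filter, Finset.sum_const, nsmul_eq_mul, mul_comm]
    _ ≤ c * k := by
        gcongr
        exact hg.card_filter_incident_le v

lemma expect_sum_edgesOf_ite_mul_kernel [Fintype X] [Nonempty X] (g : Fin n → Fin n → Bool)
    (t : ℝ) (x₁ x₂ : X) (b₀ : Y') :
    𝔼 θ : Fin n → X, ∑ e ∈ edgesOf g, (if θ e.1 = x₁ ∧ θ e.2 = x₂ then t * Q x₁ x₂ b₀ else 0) =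
      t * ((edgesOf g).card * nuBarE Q x₁ x₂ b₀) := by
  have hpair : 𝔼 y₁, 𝔼 y₂, (if y₁ = x₁ ∧ y₂ = x₂ then t * Q x₁ x₂ b₀ else 0) =
      t * nuBarE Q x₁ x₂ b₀ := by
    simp only [Fintype.expect_eq_sum_div_card, ite_and, Finset.sum_ite_irrel,
      Finset.sum_ite_eq', Finset.mem_univ, if_true, Finset.sum_const_zero, ite_div, zero_div,
      nuBarE]
    ring
  rw [Finset.expect_sum_comm, Finset.sum_congr rfl fun e he =>
    expect_apply_apply (mem_edgesOf.1 he).1.ne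
      fun y₁ y₂ => if y₁ = x₁ ∧ y₂ = x₂ then t * Q x₁ x₂ b₀ else 0,
    Finset.sum_const, nsmul_eq_mul, hpair, mul_left_comm]

variable [Fintype Y']

lemma abs_ite_mul_kernel_sub_le (hQ : ∀ x₁ x₂ b, 0 ≤ Q x₁ x₂ b)
    (hQ1 : ∀ x₁ x₂, ∑ b, Q x₁ x₂ b = 1) (t : ℝ) (x₁ x₂ : X) (b₀ : Y') (y₁ y₂ y₁' y₂' : X) :
    |(if y₁ = x₁ ∧ y₂ = x₂ then t * Q x₁ x₂ b₀ else 0) -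
      (if y₁' = x₁ ∧ y₂' = x₂ then t * Q x₁ x₂ b₀ else 0)| ≤ |t| := by
  have hle : |t * Q x₁ x₂ b₀| ≤ |t| := by
    rw [abs_mul, abs_of_nonneg (hQ x₁ x₂ b₀)]
    exact mul_le_of_le_one_right (abs_nonneg t) ((hQ1 x₁ x₂).symm ▸
      Finset.single_le_sum (fun b _ => hQ x₁ x₂ b) (Finset.mem_univ b₀))
  split_ifs
  · simp only [sub_self, abs_zero, abs_nonneg]
  · rwa [sub_zero]
  · rwa [zero_sub, abs_neg]
  · simp only [sub_self, abs_zero, abs_nonneg]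

lemma sum_kernel_mul_exp_le (hQ : ∀ x₁ x₂ b, 0 ≤ Q x₁ x₂ b) (hQ1 : ∀ x₁ x₂, ∑ b, Q x₁ x₂ b = 1)
    {t : ℝ} (ht : |t| ≤ 1) (x₁ x₂ : X) (b₀ : Y') (y₁ y₂ : X) :
    ∑ b, Q y₁ y₂ b * Real.exp (t * if y₁ = x₁ ∧ y₂ = x₂ ∧ b = b₀ then 1 else 0) ≤
      Real.exp ((if y₁ = x₁ ∧ y₂ = x₂ then t * Q x₁ x₂ b₀ else 0) + t ^ 2) := by
  rw [← sq_abs t]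
  refine (sum_mul_exp_le (hQ y₁ y₂) (hQ1 y₁ y₂) ht fun b => ?_).trans_eq ?_
  · split_ifs <;> simp
  · congr 2
    by_cases h : y₁ = x₁ ∧ y₂ = x₂
    · simp [h.1, h.2, mul_comm]
    · simp [← and_assoc, h]

lemma IsRegAdj.card_edgesOf_eq {g : Fin n → Fin n → Bool} (hg : IsRegAdj n k g) :
    ((edgesOf g).card : ℝ) = n * k / 2 :=
  eq_div_of_mul_eq two_ne_zero (by exact_mod_cast (mul_comm _ 2).trans hg.two_mul_card_edgesOf)

variable [Fintype X]

lemma IsRegAdj.expect_prod_sum_mul_exp_le [Nonempty X] (hQ : ∀ x₁ x₂ b, 0 ≤ Q x₁ x₂ b)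
    (hQ1 : ∀ x₁ x₂, ∑ b, Q x₁ x₂ b = 1) {g : Fin n → Fin n → Bool} (hg : IsRegAdj n k g)
    (hk : 0 < k) {t : ℝ} (ht : |t| * k ≤ 1) (x₁ x₂ : X) (b₀ : Y') :
    𝔼 θ : Fin n → X, ∏ e ∈ edgesOf g, ∑ b, Q (θ e.1) (θ e.2) b *
        Real.exp (t * if θ e.1 = x₁ ∧ θ e.2 = x₂ ∧ b = b₀ then 1 else 0) ≤
      Real.exp (t * ((edgesOf g).card * nuBarE Q x₁ x₂ b₀) + 2 * n * (t * k) ^ 2) := by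
  have hk1 : (1 : ℝ) ≤ k := by exact_mod_cast hk
  have ht1 : |t| ≤ 1 := (le_mul_of_one_le_right (abs_nonneg t) hk1).trans ht
  set r : X → X → ℝ := fun y₁ y₂ => if y₁ = x₁ ∧ y₂ = x₂ then t * Q x₁ x₂ b₀ else 0
  have hcard : 2 * ((edgesOf g).card : ℝ) = n * k := by exact_mod_cast hg.two_mul_card_edgesOf
  calc 𝔼 θ : Fin n → X, ∏ e ∈ edgesOf g, ∑ b, Q (θ e.1) (θ e.2) b *
        Real.exp (t * if θ e.1 = x₁ ∧ θ e.2 = x₂ ∧ b = b₀ then 1 else 0)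
      ≤ 𝔼 θ : Fin n → X, Real.exp (∑ e ∈ edgesOf g, r (θ e.1) (θ e.2)) *
          Real.exp ((edgesOf g).card * t ^ 2) := by
        refine Finset.expect_le_expect fun θ _ => ?_
        rw [← nsmul_eq_mul, ← Finset.sum_const, ← Real.exp_add, ← Finset.sum_add_distrib,
          Real.exp_sum]
        exact Finset.prod_le_prod (fun e _ => Finset.sum_nonneg fun b _ =>
          mul_nonneg (hQ _ _ _) (Real.exp_pos _).le) fun e _ =>
            sum_kernel_mul_exp_le hQ hQ1 ht1 x₁ x₂ b₀ _ _
    _ ≤ Real.exp (t * ((edgesOf g).card * nuBarE Q x₁ x₂ b₀) + n * (|t| * k) ^ 2) *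
          Real.exp ((edgesOf g).card * t ^ 2) := by
        rw [← Finset.expect_mul, ← expect_sum_edgesOf_ite_mul_kernel]
        gcongr
        exact expect_exp_le_of_bounded_diff ht
          (hg.abs_sum_edgesOf_update_sub_le (abs_ite_mul_kernel_sub_le hQ hQ1 t x₁ x₂ b₀))
    _ ≤ Real.exp (t * ((edgesOf g).card * nuBarE Q x₁ x₂ b₀) + 2 * n * (t * k) ^ 2) := by
        have hcard_le : ((edgesOf g).card : ℝ) ≤ n * k ^ 2 := by
          nlinarith [(edgesOf g).card.cast_nonneg (α := ℝ)]
        have := mul_le_mul_of_nonneg_right hcard_le (sq_nonneg t)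
        rw [← Real.exp_add, mul_pow, sq_abs]
        refine Real.exp_le_exp.2 ?_
        linarith

lemma IsRegAdj.exp_le_prod_exp {g : Fin n → Fin n → Bool} (hg : IsRegAdj n k g) (hn : 0 < n)
    (hk : 0 < k) {θ : Fin n → X} {y : Fin n × Fin n → Y'} {t s : ℝ} {x₁ x₂ : X} {b₀ : Y'}
    (hs : s ≤ t * (empEdge g θ y x₁ x₂ b₀ - nuBarE Q x₁ x₂ b₀)) :
    Real.exp (n * k / 2 * (t * nuBarE Q x₁ x₂ b₀ + s)) ≤
      ∏ e ∈ edgesOf g, Real.exp (t * if θ e.1 = x₁ ∧ θ e.2 = x₂ ∧ y e = b₀ then 1 else 0) := by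
  have hpos : (0 : ℝ) < n * k / 2 := by positivity
  have hcell : (((edgesOf g).filter fun e => θ e.1 = x₁ ∧ θ e.2 = x₂ ∧ y e = b₀).card : ℝ) =
      n * k / 2 * empEdge g θ y x₁ x₂ b₀ := by
    rw [empEdge, hg.card_edgesOf_eq, mul_inv_cancel_left₀ hpos.ne']
  rw [← Real.exp_sum, ← Finset.mul_sum, Finset.sum_boole, hcell, mul_left_comm, Real.exp_le_exp]
  gcongr
  linarith

lemma RegSpace.IsRegModel.measureReal_lt_mul_sub_le [Nonempty X] [Nonempty Y']
    (hQ : ∀ x₁ x₂ b, 0 ≤ Q x₁ x₂ b) (hQ1 : ∀ x₁ x₂, ∑ b, Q x₁ x₂ b = 1) (hn : 0 < n) (hk : 0 < k)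
    {M : RegSpace X Y' n} (hM : M.IsRegModel Q k) {ε a : ℝ} (hε : |ε| = 1) (ha : 0 ≤ a)
    (ha8 : a ≤ 8) (x₁ x₂ : X) (b₀ : Y') :
    M.P.real {ω | a < ε * (empEdge (M.G ω) (M.θ0 ω) (fun e => M.Yobs e ω) x₁ x₂ b₀ -
      nuBarE Q x₁ x₂ b₀)} ≤ Real.exp (-(n * a ^ 2 / 32)) := by
  have := hM.1
  obtain ⟨t, ht⟩ : ∃ t, t = a / (8 * k) * ε := ⟨_, rfl⟩
  have htk : |t| * k = a / 8 := by
    rw [ht, abs_mul, hε, abs_of_nonneg (by positivity)]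
    field_simp
  set Φ : (Fin n → X) → Fin n × Fin n → Y' → ℝ := fun θ e b =>
    Real.exp (t * if θ e.1 = x₁ ∧ θ e.2 = x₂ ∧ b = b₀ then 1 else 0)
  set A : ℝ := Real.exp (n * k / 2 * (t * nuBarE Q x₁ x₂ b₀ + a / (8 * k) * a)) with hA
  have hsub : M.P.real {ω | a < ε * (empEdge (M.G ω) (M.θ0 ω) (fun e => M.Yobs e ω) x₁ x₂ b₀ -
      nuBarE Q x₁ x₂ b₀)} ≤
        M.P.real {ω | A ≤ ∏ e ∈ edgesOf (M.G ω), Φ (M.θ0 ω) e (M.Yobs e ω)} := by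
    refine ENNReal.toReal_mono (measure_ne_top _ _) (measure_mono_ae ?_)
    filter_upwards [hM.ae_isRegAdj] with ω hg hω
    refine hg.exp_le_prod_exp hn hk (y := fun e => M.Yobs e ω) ?_
    rw [ht, mul_assoc]
    exact mul_le_mul_of_nonneg_left (le_of_lt hω) (by positivity)
  have hmean : 𝔼 g ∈ regGraphs n k, 𝔼 θ, ∏ e ∈ edgesOf g,
      ∑ b, Q (θ e.1) (θ e.2) b * Φ θ e b ≤ A * Real.exp (-(n * a ^ 2 / 32)) := by
    obtain ⟨g₀, hg₀⟩ := hM.exists_isRegAdj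
    refine Finset.expect_le ⟨g₀, mem_regGraphs.2 hg₀⟩ fun g hg => ?_
    have hg := mem_regGraphs.1 hg
    refine (hg.expect_prod_sum_mul_exp_le hQ hQ1 hk (by linarith) x₁ x₂ b₀).trans_eq ?_
    rw [hg.card_edgesOf_eq, ← sq_abs (t * k), abs_mul, Nat.abs_cast, htk, hA, ← Real.exp_add]
    congr 1
    field_simp
    ring
  have hmarkov := hM.mul_measureReal_le_expect_prod (φ := Φ) (a := A)
    (fun _ _ _ => (Real.exp_pos _).le) (Real.exp_pos _).le
  exact hsub.trans (le_of_mul_le_mul_left (hmarkov.trans hmean) (Real.exp_pos _))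

lemma exists_cell_of_lt_dTVedge [Nonempty X] [Nonempty Y'] {g : Fin n → Fin n → Bool}
    {θ : Fin n → X} {y : Fin n × Fin n → Y'} {η : ℝ} (h : η < dTVedge Q g θ y) :
    ∃ c : X × X × Y', 2 * η / Fintype.card (X × X × Y') <
      |empEdge g θ y c.1 c.2.1 c.2.2 - nuBarE Q c.1 c.2.1 c.2.2| := by
  have hcard : (0 : ℝ) < Fintype.card (X × X × Y') := by exact_mod_cast Fintype.card_pos
  by_contra! hcell
  have := Finset.sum_le_card_nsmul Finset.univ _ _ fun c _ => hcell c
  rw [nsmul_eq_mul, Finset.card_univ, mul_div_cancel₀ _ hcard.ne', Fintype.sum_prod_type] at this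
  simp only [Fintype.sum_prod_type] at this
  rw [dTVedge] at h
  linarith

lemma RegSpace.IsRegModel.measureReal_lt_dTVedge_le [Nonempty X] [Nonempty Y']
    (hQ : ∀ x₁ x₂ b, 0 ≤ Q x₁ x₂ b) (hQ1 : ∀ x₁ x₂, ∑ b, Q x₁ x₂ b = 1) (hn : 0 < n) (hk : 0 < k)
    {M : RegSpace X Y' n} (hM : M.IsRegModel Q k) {η : ℝ} (hη : 0 ≤ η) (hη4 : η ≤ 4) :
    M.P.real {ω | η < dTVedge Q (M.G ω) (M.θ0 ω) (fun e => M.Yobs e ω)} ≤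
      2 * Fintype.card (X × X × Y') *
        Real.exp (-(n * η ^ 2 / (8 * Fintype.card (X × X × Y') ^ 2))) := by
  have := hM.1
  set N : ℕ := Fintype.card (X × X × Y') with hN
  have hN1 : (1 : ℝ) ≤ N := by exact_mod_cast (Fintype.card_pos : 0 < Fintype.card (X × X × Y'))
  set A : X × X × Y' → ℝ → Set M.Ω := fun c ε => {ω | 2 * η / N < ε *
    (empEdge (M.G ω) (M.θ0 ω) (fun e => M.Yobs e ω) c.1 c.2.1 c.2.2 -
      nuBarE Q c.1 c.2.1 c.2.2)} with hA
  have hcell : ∀ c ε, |ε| = 1 → M.P.real (A c ε) ≤ Real.exp (-(n * η ^ 2 / (8 * N ^ 2))) := by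
    intro c ε hε
    have ha8 : 2 * η / N ≤ 8 := (div_le_self (by positivity) hN1).trans (by linarith)
    refine (hM.measureReal_lt_mul_sub_le hQ hQ1 hn hk hε (by positivity) ha8 _ _ _).trans_eq ?_
    congr 1
    field_simp
    ring
  calc M.P.real {ω | η < dTVedge Q (M.G ω) (M.θ0 ω) (fun e => M.Yobs e ω)}
      ≤ M.P.real (⋃ c, A c 1 ∪ A c (-1)) := by
        refine measureReal_mono fun ω hω => ?_
        obtain ⟨c, hc⟩ := exists_cell_of_lt_dTVedge hω
        refine Set.mem_iUnion.2 ⟨c, (lt_abs.1 hc).imp ?_ ?_⟩ <;> intro h <;>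
          simpa only [hA, Set.mem_ofPred_eq, one_mul, neg_mul] using h
    _ ≤ ∑ c, M.P.real (A c 1 ∪ A c (-1)) := measureReal_iUnion_fintype_le _
    _ ≤ ∑ _c : X × X × Y', 2 * Real.exp (-(n * η ^ 2 / (8 * N ^ 2))) := by
        refine Finset.sum_le_sum fun c _ => (measureReal_union_le _ _).trans ?_
        rw [two_mul]
        exact add_le_add (hcell c 1 (by simp)) (hcell c (-1) (by simp))
    _ = 2 * N * Real.exp (-(n * η ^ 2 / (8 * N ^ 2))) := by
        rw [Finset.sum_const, Finset.card_univ, nsmul_eq_mul, ← hN]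
        ring

end Typicality

/-! ### Labellings with small overlap -/

lemma colorCount_sub_le_of_dTVvert_lt {A : Type*} [AddGroup A] [Fintype A] {n : ℕ}
    {θ θ₀ : Fin n → A} {δ : ℝ} (h : dTVvert θ θ₀ < δ) (x : A) :
    (colorCount (θ - θ₀) x : ℝ) ≤ ((Fintype.card A : ℝ)⁻¹ + 2 * δ) * n := by
  rcases n.eq_zero_or_pos with rfl | hn
  · simp [colorCount]
  have hcount : (n : ℝ)⁻¹ * colorCount (θ - θ₀) x = ∑ x₂, empVert θ θ₀ (x + x₂) x₂ := by
    simp only [empVert, ← Finset.mul_sum, colorCount]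
    rw [Finset.card_eq_sum_card_fiberwise (f := θ₀) (t := Finset.univ) fun _ _ =>
      Finset.mem_coe.2 (Finset.mem_univ _), Nat.cast_sum]
    congr! 4 with x₂
    ext u
    simp only [Finset.mem_filter, Finset.mem_univ, true_and, Pi.sub_apply]
    exact and_congr_left fun hu => hu ▸ sub_eq_iff_eq_add
  have hcell : ∀ x₂, empVert θ θ₀ (x + x₂) x₂ - (Fintype.card A : ℝ)⁻¹ * (Fintype.card A : ℝ)⁻¹ ≤
      ∑ x₁, |empVert θ θ₀ x₁ x₂ - (Fintype.card A : ℝ)⁻¹ * (Fintype.card A : ℝ)⁻¹| := fun x₂ =>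
    (le_abs_self _).trans (Finset.single_le_sum
      (f := fun x₁ => |empVert θ θ₀ x₁ x₂ - (Fintype.card A : ℝ)⁻¹ * (Fintype.card A : ℝ)⁻¹|)
      (fun _ _ => abs_nonneg _) (Finset.mem_univ (x + x₂)))
  have hsum := Finset.sum_le_sum fun x₂ (_ : x₂ ∈ Finset.univ) => hcell x₂
  rw [Finset.sum_sub_distrib, ← hcount, Finset.sum_comm, Finset.sum_const, Finset.card_univ,
    nsmul_eq_mul, mul_inv_cancel_left₀ (by exact_mod_cast Fintype.card_ne_zero)] at hsum
  rw [dTVvert] at h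
  rw [mul_comm, ← inv_mul_le_iff₀ (by exact_mod_cast hn)]
  linarith

section Agreement

variable {X Y' : Type*} [Fintype X] {n : ℕ} {g : Fin n → Fin n → Bool}

lemma sum_sum_empEdge [Fintype Y'] [DecidableEq Y'] (θ : Fin n → X)
    (y : Fin n × Fin n → Y') (h : X → X → Y') :
    ∑ x₁, ∑ x₂, empEdge g θ y x₁ x₂ (h x₁ x₂) =
      ((edgesOf g).card : ℝ)⁻¹ * ((edgesOf g).filter fun e => y e = h (θ e.1) (θ e.2)).card := by
  simp only [empEdge, ← Finset.mul_sum]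
  congr 1
  rw [← Fintype.sum_prod_type', Finset.card_eq_sum_card_fiberwise
    (f := fun e => (θ e.1, θ e.2)) (t := Finset.univ) fun _ _ =>
      Finset.mem_coe.2 (Finset.mem_univ _), Nat.cast_sum]
  congr! 3 with x
  ext e
  simp only [Finset.mem_filter, Prod.ext_iff]
  grind

lemma card_edgesOf_mul_le_card_agree [Fintype Y'] [DecidableEq Y'] (Q : X → X → Y' → ℝ)
    (θ : Fin n → X) (y : Fin n × Fin n → Y') (h : X → X → Y') :
    (edgesOf g).card * (∑ x₁, ∑ x₂, nuBarE Q x₁ x₂ (h x₁ x₂) - 2 * dTVedge Q g θ y) ≤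
      ((edgesOf g).filter fun e => y e = h (θ e.1) (θ e.2)).card := by
  rcases (edgesOf g).card.eq_zero_or_pos with h0 | hpos
  · simp [h0]
  rw [← le_inv_mul_iff₀ (by exact_mod_cast hpos), ← sum_sum_empEdge, sub_le_iff_le_add',
    ← sub_le_iff_le_add, dTVedge, mul_inv_cancel_left₀ two_ne_zero]
  simp only [← Finset.sum_sub_distrib]
  refine Finset.sum_le_sum fun x₁ _ => Finset.sum_le_sum fun x₂ _ => ?_
  rw [← neg_sub]
  exact (neg_le_abs _).trans (Finset.single_le_sum
    (f := fun b => |empEdge g θ y x₁ x₂ b - nuBarE Q x₁ x₂ b|)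
    (fun _ _ => abs_nonneg _) (Finset.mem_univ (h x₁ x₂)))

end Agreement

/-- The likelihood ratio of a `ℤ_q`-synchronization observation that agrees with the label
difference against one that does not, i.e. `(1 - p + p / q) / (p / q)`. It is the optimal tilt in
the Chernoff bound for the number of agreements. -/
def agreementRatio (p : ℝ) (q : ℕ) : ℝ := (p + q * (1 - p)) / p

/-- The information carried by one edge observation: the denominator of `kstar`, equal to the
mutual information between the observation and the label difference. -/
def infoRate (p : ℝ) (q : ℕ) : ℝ :=
  (1 - p + p / q) * Real.log (p + q * (1 - p)) + (1 - 1 / (q : ℝ)) * p * Real.log p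

section Sync

variable {q : ℕ} {p : ℝ}

lemma one_le_agreementRatio (hp : p ∈ Set.Ioo (0 : ℝ) 1) : 1 ≤ agreementRatio p q := by
  have : 0 ≤ q * (1 - p) := mul_nonneg q.cast_nonneg (sub_nonneg.2 hp.2.le)
  rw [agreementRatio, one_le_div hp.1]
  linarith

lemma infoRate_eq (hp : p ∈ Set.Ioo (0 : ℝ) 1) :
    infoRate p q = (1 - p + p / q) * Real.log (agreementRatio p q) + Real.log p := by
  have : 0 ≤ q * (1 - p) := mul_nonneg q.cast_nonneg (sub_nonneg.2 hp.2.le)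
  rw [infoRate, agreementRatio, Real.log_div (by linarith [hp.1]) hp.1.ne']
  ring

variable [NeZero q]

lemma Qsync_nonneg (hp : p ∈ Set.Icc (0 : ℝ) 1) (a b y : ZMod q) : 0 ≤ Qsync q p a b y := by
  have := hp.1
  have := sub_nonneg.2 hp.2
  rw [Qsync]
  positivity

lemma sum_Qsync (p : ℝ) (a b : ZMod q) : ∑ y, Qsync q p a b y = 1 := by
  have hq : (q : ℝ) ≠ 0 := by exact_mod_cast NeZero.ne q
  simp only [Qsync, Finset.sum_add_distrib, ← Finset.mul_sum, Finset.sum_ite_eq',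
    Finset.mem_univ, if_true, Finset.sum_const, Finset.card_univ, ZMod.card, nsmul_eq_mul]
  field_simp
  ring

lemma sum_Qsync_mul_ite (p : ℝ) (a b c : ZMod q) (z : ℝ) :
    ∑ y, Qsync q p a b y * (if y = c then z else 1) = 1 + (z - 1) * Qsync q p a b c := by
  have h : ∀ y, Qsync q p a b y * (if y = c then z else 1) =
      Qsync q p a b y + if y = c then (z - 1) * Qsync q p a b y else 0 := by
    intro y
    split_ifs <;> ring
  simp only [h, Finset.sum_add_distrib, sum_Qsync, Finset.sum_ite_eq', Finset.mem_univ, if_true]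

lemma Qsync_add_sub_add (p : ℝ) (a b c d : ZMod q) :
    Qsync q p c d (a + c - (b + d)) = Qsync q p a b 0 := by
  have : a + c - (b + d) = c - d ↔ 0 = a - b := by
    rw [add_sub_add_comm, add_eq_right, eq_comm]
  simp only [Qsync, this]

lemma sum_nuBarE_Qsync (p : ℝ) :
    ∑ x₁, ∑ x₂, nuBarE (Qsync q p) x₁ x₂ (x₁ - x₂) = 1 - p + p / q := by
  have hq : (q : ℝ) ≠ 0 := by exact_mod_cast NeZero.ne q
  simp only [nuBarE, Qsync, if_true, Finset.sum_const, Finset.card_univ, ZMod.card,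
    nsmul_eq_mul, mul_one]
  field_simp

lemma sum_sum_one_add_mul_Qsync (hp : p ≠ 0) :
    ∑ x, ∑ y, (1 + (agreementRatio p q - 1) * Qsync q p x y 0) = (q : ℝ) ^ 2 / p := by
  have hq : (q : ℝ) ≠ 0 := by exact_mod_cast NeZero.ne q
  have hrow : ∀ x : ZMod q, ∑ y, Qsync q p x y 0 = 1 := fun x => by
    simp only [Qsync, eq_comm (a := (0 : ZMod q)), sub_eq_zero, Finset.sum_add_distrib,
      ← Finset.mul_sum, Finset.sum_ite_eq, Finset.mem_univ, if_true, Finset.sum_const,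
      Finset.card_univ, ZMod.card, nsmul_eq_mul]
    field_simp
    ring
  simp only [Finset.sum_add_distrib, ← Finset.mul_sum, hrow, Finset.sum_const, Finset.card_univ,
    ZMod.card, nsmul_eq_mul, agreementRatio]
  field_simp
  ring

variable {n k m : ℕ}

lemma expect_regGraphs_prod_one_add_mul_Qsync_le (hp : p ∈ Set.Ioo (0 : ℝ) 1)
    (hnk : n * k = 2 * m) (hm : 7 * (k + 1) ^ 2 ≤ 2 * m) {δ : ℝ} (hδ : 0 ≤ δ)
    {ψ : Fin n → ZMod q} (hψ : ∀ x, (colorCount ψ x : ℝ) ≤ ((q : ℝ)⁻¹ + 2 * δ) * n) :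
    𝔼 g ∈ regGraphs n k, ∏ e ∈ edgesOf g,
        (1 + (agreementRatio p q - 1) * Qsync q p (ψ e.1) (ψ e.2) 0) ≤
      polyLoss k q m * Real.exp (m * (4 * (q * δ) - Real.log p)) := by
  have hq : (0 : ℝ) < q := by exact_mod_cast NeZero.pos q
  have hz := sub_nonneg.2 (one_le_agreementRatio (q := q) hp)
  have hp' : p ∈ Set.Icc (0 : ℝ) 1 := Set.Ioo_subset_Icc_self hp
  have hρ : ((q : ℝ)⁻¹ + 2 * δ) ^ 2 * ((q : ℝ) ^ 2 / p) ≤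
      Real.exp (4 * (q * δ) - Real.log p) := by
    have hexp : (1 + 2 * (q * δ)) ^ 2 ≤ Real.exp (4 * (q * δ)) := by
      rw [show 4 * (q * δ) = (2 : ℕ) * (2 * (q * δ)) by push_cast; ring, Real.exp_nat_mul]
      gcongr
      linarith [Real.add_one_le_exp (2 * (q * δ))]
    rw [Real.exp_sub, Real.exp_log hp.1, ← mul_div_assoc, ← mul_pow, add_mul,
      inv_mul_cancel₀ hq.ne', mul_assoc, mul_comm δ]
    have := hp.1
    gcongr
  refine (expect_regGraphs_prod_le (w := fun x y => 1 + (agreementRatio p q - 1) * Qsync q p x y 0)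
    hnk hm (by positivity) hψ (fun x y => ?_) fun x y => ?_).trans ?_
  · have := Qsync_nonneg hp' x y 0
    positivity
  · simp only [Qsync, eq_comm (a := (0 : ZMod q)), sub_eq_zero, eq_comm (a := x)]
  · rw [ZMod.card, sum_sum_one_add_mul_Qsync hp.1.ne', Real.exp_nat_mul]
    have := hp.1
    unfold polyLoss
    gcongr

lemma IsRegAdj.exp_le_prod_agree (hp : p ∈ Set.Ioo (0 : ℝ) 1) {g : Fin n → Fin n → Bool}
    (hg : IsRegAdj n k g) (hnk : n * k = 2 * m) {θ : Fin n → ZMod q}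
    {y : Fin n × Fin n → ZMod q} {η : ℝ} (h : θ ∈ typicalSet (Qsync q p) η g y) :
    Real.exp (m * (1 - p + p / q - 2 * η) * Real.log (agreementRatio p q)) ≤
      ∏ e ∈ edgesOf g, if y e = θ e.1 - θ e.2 then agreementRatio p q else 1 := by
  have hz := one_le_agreementRatio (q := q) hp
  have hcard : (edgesOf g).card = m := by
    have := hg.two_mul_card_edgesOf
    lia
  have hagree := card_edgesOf_mul_le_card_agree (g := g) (Qsync q p) θ y fun a b => a - b
  rw [sum_nuBarE_Qsync, hcard] at hagree
  rw [Finset.prod_ite, Finset.prod_const, Finset.prod_const_one, mul_one,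
    ← Real.exp_log (pow_pos (one_pos.trans_le hz) _), Real.log_pow, Real.exp_le_exp]
  have hdTV : dTVedge (Qsync q p) g θ y ≤ η := h
  refine mul_le_mul_of_nonneg_right (le_trans ?_ hagree) (Real.log_nonneg hz)
  gcongr

variable {M : RegSpace (ZMod q) (ZMod q) n}

lemma RegSpace.IsRegModel.measureReal_add_mem_typicalSet_le (hM : M.IsRegModel (Qsync q p) k)
    (hp : p ∈ Set.Ioo (0 : ℝ) 1) (hnk : n * k = 2 * m) (hm : 7 * (k + 1) ^ 2 ≤ 2 * m) {η δ : ℝ}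
    (hδ : 0 ≤ δ) {ψ : Fin n → ZMod q}
    (hψ : ∀ x, (colorCount ψ x : ℝ) ≤ ((q : ℝ)⁻¹ + 2 * δ) * n) :
    M.P.real {ω | ψ + M.θ0 ω ∈ typicalSet (Qsync q p) η (M.G ω) fun e => M.Yobs e ω} ≤
      polyLoss k q m * Real.exp (m * (2 * η * Real.log (agreementRatio p q) + 4 * (q * δ) -
        infoRate p q)) := by
  have := hM.1
  have hz := one_le_agreementRatio (q := q) hp
  set L := Real.log (agreementRatio p q) with hL
  set φ : (Fin n → ZMod q) → Fin n × Fin n → ZMod q → ℝ := fun θ e b =>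
    if b = (ψ + θ) e.1 - (ψ + θ) e.2 then agreementRatio p q else 1 with hφ
  set a := Real.exp (m * (1 - p + p / q - 2 * η) * L) with ha
  have hsub : M.P.real {ω | ψ + M.θ0 ω ∈ typicalSet (Qsync q p) η (M.G ω) fun e => M.Yobs e ω} ≤
      M.P.real {ω | a ≤ ∏ e ∈ edgesOf (M.G ω), φ (M.θ0 ω) e (M.Yobs e ω)} := by
    refine ENNReal.toReal_mono (measure_ne_top _ _) (measure_mono_ae ?_)
    filter_upwards [hM.ae_isRegAdj] with ω hg hω
    exact hg.exp_le_prod_agree hp hnk hω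
  have hmarkov := hM.mul_measureReal_le_expect_prod (φ := φ) (a := a)
    (fun _ _ _ => by simp only [hφ]; split_ifs <;> linarith) (Real.exp_pos _).le
  simp only [hφ, sum_Qsync_mul_ite, Pi.add_apply, Qsync_add_sub_add, Fintype.expect_const]
    at hmarkov
  refine hsub.trans (le_of_mul_le_mul_left ((hmarkov.trans
    (expect_regGraphs_prod_one_add_mul_Qsync_le hp hnk hm hδ hψ)).trans_eq ?_) (Real.exp_pos _))
  rw [ha, mul_left_comm (Real.exp _), ← Real.exp_add, infoRate_eq hp, ← hL]
  ring_nf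

lemma RegSpace.IsRegModel.measureReal_exists_dTVvert_lt_le (hM : M.IsRegModel (Qsync q p) k)
    (hp : p ∈ Set.Ioo (0 : ℝ) 1) (hnk : n * k = 2 * m) (hm : 7 * (k + 1) ^ 2 ≤ 2 * m) {η δ : ℝ}
    (hδ : 0 ≤ δ) :
    M.P.real {ω | ∃ θ ∈ typicalSet (Qsync q p) η (M.G ω) fun e => M.Yobs e ω,
        dTVvert θ (M.θ0 ω) < δ} ≤
      polyLoss k q m * Real.exp (n * Real.log q +
        m * (2 * η * Real.log (agreementRatio p q) + 4 * (q * δ) - infoRate p q)) := by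
  have := hM.1
  have hq : (0 : ℝ) < q := by exact_mod_cast NeZero.pos q
  set S : Finset (Fin n → ZMod q) :=
    Finset.univ.filter fun ψ => ∀ x, (colorCount ψ x : ℝ) ≤ ((q : ℝ)⁻¹ + 2 * δ) * n with hS
  set r := polyLoss k q m * Real.exp (m * (2 * η * Real.log (agreementRatio p q) +
    4 * (q * δ) - infoRate p q)) with hr
  have hr0 : 0 ≤ r := by unfold r polyLoss; positivity
  have hcard : (S.card : ℝ) ≤ Real.exp (n * Real.log q) := by
    rw [Real.exp_nat_mul, Real.exp_log hq]
    have := S.card_le_univ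
    rw [Fintype.card_fun, ZMod.card, Fintype.card_fin] at this
    exact_mod_cast this
  calc M.P.real {ω | ∃ θ ∈ typicalSet (Qsync q p) η (M.G ω) fun e => M.Yobs e ω,
        dTVvert θ (M.θ0 ω) < δ}
      ≤ M.P.real (⋃ ψ ∈ S,
          {ω | ψ + M.θ0 ω ∈ typicalSet (Qsync q p) η (M.G ω) fun e => M.Yobs e ω}) := by
        refine measureReal_mono (fun ω ⟨θ, hθ, hlt⟩ => ?_) (measure_ne_top _ _)
        have hψ := colorCount_sub_le_of_dTVvert_lt hlt
        rw [ZMod.card] at hψ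
        refine Set.mem_iUnion₂.2 ⟨θ - M.θ0 ω, by simpa [hS] using hψ, ?_⟩
        rwa [Set.mem_ofPred_eq, sub_add_cancel]
    _ ≤ ∑ ψ ∈ S, M.P.real
          {ω | ψ + M.θ0 ω ∈ typicalSet (Qsync q p) η (M.G ω) fun e => M.Yobs e ω} :=
        measureReal_biUnion_finset_le _ _
    _ ≤ S.card * r := by
        rw [← nsmul_eq_mul]
        exact Finset.sum_le_card_nsmul _ _ _ fun ψ hψ =>
          hM.measureReal_add_mem_typicalSet_le hp hnk hm hδ (Finset.mem_filter.1 hψ).2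
    _ ≤ Real.exp (n * Real.log q) * r := by gcongr
    _ = _ := by rw [hr, mul_left_comm, ← Real.exp_add]

end Sync

/-! ### The threshold -/

lemma mul_infoRate {q : ℕ} (hq : q ≠ 0) (p : ℝ) :
    q * infoRate p q = (p + q * (1 - p)) * Real.log (p + q * (1 - p)) +
      (q - 1) * (p * Real.log p) := by
  have : (q : ℝ) ≠ 0 := by exact_mod_cast hq
  rw [infoRate]
  field_simp
  ring

lemma infoRate_pos {q : ℕ} (hq : 2 ≤ q) {p : ℝ} (hp : p ∈ Set.Ioo (0 : ℝ) 1) :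
    0 < infoRate p q := by
  have hq2 : (2 : ℝ) ≤ q := by exact_mod_cast hq
  have hw : 1 < p + q * (1 - p) := by nlinarith [hp.2]
  have hagree := Real.self_sub_one_lt_mul_log (zero_le_one.trans hw.le) hw.ne'
  have hdisagree := mul_le_mul_of_nonneg_left (Real.self_sub_one_le_mul_log hp.1.le)
    (by linarith : 0 ≤ (q : ℝ) - 1)
  refine pos_of_mul_pos_right ?_ (q.cast_nonneg (α := ℝ))
  rw [mul_infoRate (by lia)]
  linarith

lemma abs_one_add_mul_log_sub_le {x : ℝ} (hx : |x| ≤ 1 / 2) :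
    |(1 + x) * Real.log (1 + x) - (x + x ^ 2 / 2)| ≤ 4 * |x| ^ 3 := by
  have hlog : |Real.log (1 + x) - (x - x ^ 2 / 2)| ≤ 2 * |x| ^ 3 := by
    have htaylor := Real.abs_log_sub_add_sum_range_le (x := -x) (by rw [abs_neg]; linarith) 2
    rw [abs_neg, sub_neg_eq_add] at htaylor
    calc |Real.log (1 + x) - (x - x ^ 2 / 2)|
        = |∑ i ∈ Finset.range 2, (-x) ^ (i + 1) / ((i : ℝ) + 1) + Real.log (1 + x)| := by
          rw [Finset.sum_range_succ, Finset.sum_range_one]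
          push_cast
          ring_nf
      _ ≤ |x| ^ 3 / (1 - |x|) := htaylor
      _ ≤ |x| ^ 3 / (1 / 2) := by gcongr; linarith
      _ = 2 * |x| ^ 3 := by ring
  have hfactor : |1 + x| ≤ 3 / 2 := by
    rw [abs_le] at hx ⊢
    constructor <;> linarith
  calc |(1 + x) * Real.log (1 + x) - (x + x ^ 2 / 2)|
      = |(1 + x) * (Real.log (1 + x) - (x - x ^ 2 / 2)) - x ^ 3 / 2| := by ring_nf
    _ ≤ |1 + x| * |Real.log (1 + x) - (x - x ^ 2 / 2)| + |x| ^ 3 / 2 := by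
        refine (abs_sub _ _).trans_eq ?_
        rw [abs_mul, abs_div, abs_pow, abs_two]
    _ ≤ 3 / 2 * (2 * |x| ^ 3) + |x| ^ 3 / 2 := by gcongr
    _ ≤ 4 * |x| ^ 3 := by linarith [pow_nonneg (abs_nonneg x) 3]

lemma abs_infoRate_sub_le {q : ℕ} (hq : 2 ≤ q) {s : ℝ} (hs : 0 ≤ s)
    (hqs : ((q : ℝ) - 1) * s ≤ 1 / 2) :
    |infoRate (1 - s) q - ((q : ℝ) - 1) * s ^ 2 / 2| ≤ 8 * ((q : ℝ) - 1) ^ 3 * s ^ 3 := by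
  have hq2 : (2 : ℝ) ≤ q := by exact_mod_cast hq
  set r : ℝ := q - 1 with hr
  have hr1 : 1 ≤ r := by rw [hr]; linarith
  have hsr : s ≤ r * s := le_mul_of_one_le_left hs hr1
  have hagree := abs_one_add_mul_log_sub_le (x := r * s)
    (by rwa [abs_of_nonneg (hs.trans hsr)])
  have hdisagree := abs_one_add_mul_log_sub_le (x := -s)
    (by rw [abs_neg, abs_of_nonneg hs]; linarith)
  rw [abs_of_nonneg (hs.trans hsr)] at hagree
  rw [abs_neg, abs_of_nonneg hs, ← sub_eq_add_neg] at hdisagree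
  have hsplit : q * (infoRate (1 - s) q - r * s ^ 2 / 2) =
      ((1 + r * s) * Real.log (1 + r * s) - (r * s + (r * s) ^ 2 / 2)) +
        r * ((1 - s) * Real.log (1 - s) - (-s + (-s) ^ 2 / 2)) := by
    rw [mul_sub, mul_infoRate (by lia), show 1 - s + q * (1 - (1 - s)) = 1 + r * s by grind]
    grind
  calc |infoRate (1 - s) q - r * s ^ 2 / 2|
      ≤ (q : ℝ) * |infoRate (1 - s) q - r * s ^ 2 / 2| :=
        le_mul_of_one_le_left (abs_nonneg _) (by linarith)
    _ = |(q : ℝ) * (infoRate (1 - s) q - r * s ^ 2 / 2)| := by rw [abs_mul, Nat.abs_cast]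
    _ ≤ 4 * (r * s) ^ 3 + r * (4 * s ^ 3) := by
        rw [hsplit]
        refine (abs_add_le _ _).trans (add_le_add hagree ?_)
        rw [abs_mul, abs_of_nonneg (zero_le_one.trans hr1)]
        gcongr
    _ ≤ 4 * (r * s) ^ 3 + r ^ 3 * (4 * s ^ 3) := by
        gcongr
        exact le_self_pow₀ hr1 three_ne_zero
    _ = 8 * r ^ 3 * s ^ 3 := by ring

lemma abs_inv_sub_inv_le {x y ε : ℝ} (hy : 0 < y) (h : |x - y| ≤ ε) (hε : ε ≤ y / 2) :
    |x⁻¹ - y⁻¹| ≤ 2 * ε / y ^ 2 := by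
  have hx : y / 2 ≤ x := by linarith [(abs_le.1 h).1]
  have hx0 : 0 < x := (half_pos hy).trans_le hx
  calc |x⁻¹ - y⁻¹| = |x - y| / (x * y) := by
        rw [inv_sub_inv hx0.ne' hy.ne', abs_div, abs_sub_comm, abs_of_pos (mul_pos hx0 hy)]
    _ ≤ ε / (y / 2 * y) := by gcongr; exact (abs_nonneg _).trans h
    _ = 2 * ε / y ^ 2 := by field_simp

lemma exists_abs_kstar_sub_le {q : ℕ} (hq : 2 ≤ q) :
    ∃ C : ℝ, 0 < C ∧ ∃ p₀ ∈ Set.Ioo (0 : ℝ) 1, ∀ p ∈ Set.Ioo p₀ (1 : ℝ),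
      |kstar p q - 4 * Real.log q / (((q : ℝ) - 1) * (1 - p) ^ 2)| ≤ C / (1 - p) := by
  have hq2 : (2 : ℝ) ≤ q := by exact_mod_cast hq
  have hlog : 0 < Real.log q := Real.log_pos (by linarith)
  set r : ℝ := q - 1 with hr
  have hr1 : 1 ≤ r := by rw [hr]; linarith
  have hr2 : 1 ≤ r ^ 2 := one_le_pow₀ hr1
  refine ⟨128 * Real.log q * r, by positivity, 1 - 1 / (32 * r ^ 2),
    ⟨sub_pos.2 ((div_lt_one (by positivity)).2 (by linarith)), sub_lt_self _ (by positivity)⟩, ?_⟩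
  rintro p ⟨hp0, hp1⟩
  obtain ⟨s, rfl⟩ : ∃ s, p = 1 - s := ⟨1 - p, by ring⟩
  rw [sub_sub_cancel]
  have hs : 0 < s := by linarith
  have hrs : r ^ 2 * s ≤ 1 / 32 := by
    have hs32 : s * (32 * r ^ 2) < 1 :=
      (lt_div_iff₀ (by positivity)).1 ((sub_lt_sub_iff_left 1).1 hp0)
    linarith
  have hinfo := abs_infoRate_sub_le hq hs.le (by nlinarith)
  rw [← hr] at hinfo
  have hinv := abs_inv_sub_inv_le (by positivity) hinfo
    (by nlinarith [(by positivity : 0 < r * s ^ 2)])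
  calc |kstar (1 - s) q - 4 * Real.log q / (r * s ^ 2)|
      = 2 * Real.log q * |(infoRate (1 - s) q)⁻¹ - (r * s ^ 2 / 2)⁻¹| := by
        rw [show kstar (1 - s) q = 2 * Real.log q * (infoRate (1 - s) q)⁻¹ from rfl,
          ← abs_of_pos (mul_pos two_pos hlog), ← abs_mul, abs_of_pos (mul_pos two_pos hlog)]
        congr 1
        field_simp
        ring
    _ ≤ 2 * Real.log q * (2 * (8 * r ^ 3 * s ^ 3) / (r * s ^ 2 / 2) ^ 2) := by gcongr
    _ = 128 * Real.log q * r / s := by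
        field_simp
        norm_num

/-! ### Above the threshold -/

lemma eventually_log_sq_le {ε : ℝ} (hε : 0 < ε) :
    ∀ᶠ n : ℕ in atTop, Real.log n ^ 2 ≤ ε * n := by
  filter_upwards [tendsto_natCast_atTop_atTop.eventually
    ((Real.isLittleO_pow_log_id_atTop (n := 2)).bound hε)] with n hn
  simpa [abs_of_nonneg (sq_nonneg (Real.log n))] using hn

lemma ηseq_nonneg (n : ℕ) : 0 ≤ ηseq n :=
  div_nonneg (Real.log_natCast_nonneg n) (Real.sqrt_nonneg _)

lemma mul_ηseq_sq {n : ℕ} (hn : 0 < n) : n * ηseq n ^ 2 = Real.log n ^ 2 := by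
  have : (0 : ℝ) < n := by exact_mod_cast hn
  rw [ηseq, div_pow, Real.sq_sqrt this.le]
  field_simp

lemma eventually_ηseq_le {ε : ℝ} (hε : 0 < ε) : ∀ᶠ n : ℕ in atTop, ηseq n ≤ ε := by
  filter_upwards [eventually_log_sq_le (pow_pos hε 2), eventually_gt_atTop 0] with n hn hn0
  rw [← mul_ηseq_sq hn0, mul_comm] at hn
  have : (0 : ℝ) < n := by exact_mod_cast hn0
  exact (sq_le_sq₀ (ηseq_nonneg n) hε.le).1 (le_of_mul_le_mul_right hn this)

lemma eventually_polyLoss_le (k q : ℕ) {b : ℝ} (hb : 0 < b) :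
    ∀ᶠ m : ℕ in atTop, polyLoss k q m ≤ Real.exp (b * m) := by
  set A := 8 * (k + k ^ 2)
  set C := 2 * 3 ^ A * (Real.exp 1 * 3) ^ q with hC
  have hC0 : 0 < C := by positivity
  filter_upwards [tendsto_natCast_atTop_atTop.eventually
    ((isLittleO_pow_exp_pos_mul_atTop (A + q) hb).bound (inv_pos.2 hC0)),
    eventually_ge_atTop 1] with m hm hm1
  rw [Real.norm_of_nonneg (by positivity), Real.norm_of_nonneg (by positivity),
    le_inv_mul_iff₀ hC0] at hm
  have hm1 : (1 : ℝ) ≤ m := by exact_mod_cast hm1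
  calc polyLoss k q m ≤ 2 * (3 * m : ℝ) ^ A * (Real.exp 1 * (3 * m)) ^ q := by
        unfold polyLoss
        gcongr <;> linarith
    _ = C * (m : ℝ) ^ (A + q) := by
        rw [hC]
        ring
    _ ≤ Real.exp (b * m) := hm

lemma eventually_forall_mul_eq_two_mul {k : ℕ} (hk : 0 < k) {P : ℕ → Prop}
    (h : ∀ᶠ m in atTop, P m) : ∀ᶠ n in atTop, ∀ m, n * k = 2 * m → P m := by
  obtain ⟨m₀, hm₀⟩ := eventually_atTop.1 h
  filter_upwards [eventually_ge_atTop (2 * m₀)] with n hn m hnm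
  have := Nat.le_mul_of_pos_right n hk
  exact hm₀ m (by lia)

lemma eventually_polyLoss_mul_exp_le {k : ℕ} (hk : 0 < k) (q : ℕ) {γ : ℝ} (hγ : 0 < γ) :
    ∀ᶠ n : ℕ in atTop, ∀ m : ℕ, n * k = 2 * m →
      polyLoss k q m * Real.exp (-(γ * m)) ≤ Real.exp (-Real.log n ^ 2) := by
  filter_upwards [eventually_forall_mul_eq_two_mul hk (eventually_polyLoss_le k q (half_pos hγ)),
    eventually_log_sq_le (div_pos hγ four_pos)] with n hloss hlog m hnm
  have hnm' : (n : ℝ) ≤ 2 * m := by exact_mod_cast hnm ▸ Nat.le_mul_of_pos_right n hk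
  calc polyLoss k q m * Real.exp (-(γ * m))
      ≤ Real.exp (γ / 2 * m) * Real.exp (-(γ * m)) := by gcongr; exact hloss m hnm
    _ = Real.exp (-(γ / 4 * (2 * m))) := by
        rw [← Real.exp_add]
        ring_nf
    _ ≤ Real.exp (-(γ / 4 * n)) := by gcongr
    _ ≤ Real.exp (-Real.log n ^ 2) := by gcongr

lemma kstar_nonneg {q : ℕ} (hq : 2 ≤ q) {p : ℝ} (hp : p ∈ Set.Ioo (0 : ℝ) 1) : 0 ≤ kstar p q :=
  div_nonneg (mul_nonneg zero_le_two (Real.log_natCast_nonneg q)) (infoRate_pos hq hp).le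

section Sync

variable {q k : ℕ} [NeZero q] {p : ℝ}

lemma exists_eventually_measureReal_dTVvert_lt_le (hq : 2 ≤ q) (hp : p ∈ Set.Ioo (0 : ℝ) 1)
    (hkp : kstar p q < k) :
    ∃ δ : ℝ, 0 < δ ∧ ∀ᶠ n : ℕ in atTop, ∀ M : RegSpace (ZMod q) (ZMod q) n,
      M.IsRegModel (Qsync q p) k →
      M.P.real {ω | ∃ θ ∈ typicalSet (Qsync q p) (ηseq n) (M.G ω) fun e => M.Yobs e ω,
        dTVvert θ (M.θ0 ω) < δ} ≤ Real.exp (-Real.log n ^ 2) := by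
  have : (0 : ℝ) < q := by exact_mod_cast NeZero.pos q
  have hk0 : (0 : ℝ) < k := (kstar_nonneg hq hp).trans_lt hkp
  have hk : 0 < k := by exact_mod_cast hk0
  have hL := Real.log_nonneg (one_le_agreementRatio (q := q) hp)
  set L := Real.log (agreementRatio p q)
  set γ := infoRate p q - 2 * Real.log q / k with hγ
  have hγ0 : 0 < γ := sub_pos.2 ((div_lt_comm₀ (infoRate_pos hq hp) hk0).1 hkp)
  refine ⟨γ / (16 * q), by positivity, ?_⟩
  filter_upwards [eventually_polyLoss_mul_exp_le hk q (half_pos hγ0),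
    eventually_ηseq_le (by positivity : 0 < γ / (8 * (L + 1))),
    eventually_forall_mul_eq_two_mul hk (eventually_ge_atTop (7 * (k + 1) ^ 2))]
    with n hloss hη hm M hM
  obtain ⟨g, hg⟩ := hM.exists_isRegAdj
  have hnk := hg.two_mul_card_edgesOf.symm
  set m := (edgesOf g).card
  have hnk' : (n : ℝ) * k = 2 * m := by exact_mod_cast hnk
  have hηL : 2 * ηseq n * L ≤ γ / 4 := by
    calc 2 * ηseq n * L ≤ 2 * (γ / (8 * (L + 1))) * (L + 1) := by gcongr; linarith
      _ = γ / 4 := by field_simp; norm_num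
  have hexponent : n * Real.log q + m * (2 * ηseq n * L + 4 * (q * (γ / (16 * q))) -
      infoRate p q) ≤ -(γ / 2 * m) := by
    have hδ : 4 * (q * (γ / (16 * q))) = γ / 4 := by field_simp; norm_num
    have hlabels : n * Real.log q = m * (infoRate p q - γ) := by
      rw [hγ, sub_sub_cancel]
      field_simp
      linear_combination Real.log q * hnk'
    rw [hlabels, hδ]
    nlinarith [mul_le_mul_of_nonneg_left hηL m.cast_nonneg]
  refine (hM.measureReal_exists_dTVvert_lt_le hp hnk ((hm m hnk).trans (by lia))
    (by positivity)).trans (le_trans ?_ (hloss m hnk))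
  unfold polyLoss
  gcongr

lemma eventually_measureReal_ηseq_lt_dTVedge_le (hk : 0 < k) (hp : p ∈ Set.Icc (0 : ℝ) 1) :
    ∀ᶠ n : ℕ in atTop, ∀ M : RegSpace (ZMod q) (ZMod q) n, M.IsRegModel (Qsync q p) k →
      M.P.real {ω | ηseq n < dTVedge (Qsync q p) (M.G ω) (M.θ0 ω) fun e => M.Yobs e ω} ≤
        2 * q ^ 3 * Real.exp (-(1 / (8 * (q ^ 3) ^ 2)) * Real.log n ^ 2) := by
  filter_upwards [eventually_ηseq_le four_pos, eventually_gt_atTop 0] with n hη hn M hM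
  refine (hM.measureReal_lt_dTVedge_le (Qsync_nonneg hp) (sum_Qsync p) hn hk (ηseq_nonneg n)
    hη).trans_eq ?_
  simp only [Fintype.card_prod, ZMod.card, mul_ηseq_sq hn]
  push_cast
  ring_nf

end Sync

lemma RegSpace.one_sub_le_measureReal_typicalSet [Fintype X] [Fintype Y'] {n : ℕ}
    (M : RegSpace X Y' n) [IsProbabilityMeasure M.P] (Q : X → X → Y' → ℝ) (η δ : ℝ) :
    1 - (M.P.real {ω | η < dTVedge Q (M.G ω) (M.θ0 ω) fun e => M.Yobs e ω} +
      M.P.real {ω | ∃ θ ∈ typicalSet Q η (M.G ω) fun e => M.Yobs e ω, dTVvert θ (M.θ0 ω) < δ}) ≤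
    M.P.real {ω | (typicalSet Q η (M.G ω) fun e => M.Yobs e ω).Nonempty ∧
      ∀ θ ∈ typicalSet Q η (M.G ω) fun e => M.Yobs e ω, δ ≤ dTVvert θ (M.θ0 ω)} := by
  rw [sub_le_iff_le_add, ← probReal_univ (μ := M.P)]
  refine le_trans (measureReal_mono (fun ω _ => ?_) (measure_ne_top _ _))
    ((measureReal_union_le _ _).trans (add_le_add_right (measureReal_union_le _ _) _))
  by_cases htyp : η < dTVedge Q (M.G ω) (M.θ0 ω) fun e => M.Yobs e ω
  · exact .inr (.inl htyp)
  by_cases hlow : ∃ θ ∈ typicalSet Q η (M.G ω) fun e => M.Yobs e ω, dTVvert θ (M.θ0 ω) < δ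
  · exact .inr (.inr hlow)
  · push Not at hlow
    exact .inl ⟨⟨M.θ0 ω, not_lt.1 htyp⟩, hlow⟩

lemma exists_forall_le_inv_mul_exp {ℓ : ℕ → ℝ} (hℓ : ∀ n, 0 ≤ ℓ n) {K c : ℝ} (hK : 0 < K)
    (hc : 0 < c) (n₀ : ℕ) :
    ∃ c₀ : ℝ, 0 < c₀ ∧ ∀ (n : ℕ) (r : ℝ), r ≤ 1 → (n₀ ≤ n → r ≤ K * Real.exp (-c * ℓ n)) →
      r ≤ c₀⁻¹ * Real.exp (-c₀ * ℓ n) := by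
  set S := ∑ i ∈ Finset.range n₀, ℓ i
  have hS0 : 0 ≤ S := Finset.sum_nonneg fun i _ => hℓ i
  set c₀ := min (min c K⁻¹) (Real.exp (-S))
  have hc₀pos : 0 < c₀ := lt_min (lt_min hc (inv_pos.2 hK)) (Real.exp_pos _)
  have hc₀c : c₀ ≤ c := (min_le_left _ _).trans (min_le_left _ _)
  have hc₀K : c₀ ≤ K⁻¹ := (min_le_left _ _).trans (min_le_right _ _)
  have hc₀S : c₀ ≤ Real.exp (-S) := min_le_right _ _
  refine ⟨c₀, hc₀pos, fun n r hr h => ?_⟩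
  have hn := hℓ n
  rcases le_or_gt n₀ n with hlarge | hsmall
  · have : K ≤ c₀⁻¹ := (le_inv_comm₀ hK hc₀pos).2 hc₀K
    refine (h hlarge).trans ?_
    gcongr
  · have hnS : ℓ n ≤ S := Finset.single_le_sum (fun i _ => hℓ i) (Finset.mem_range.2 hsmall)
    refine hr.trans ?_
    rw [inv_mul_eq_div, one_le_div hc₀pos]
    refine hc₀S.trans (Real.exp_le_exp.2 ?_)
    have : c₀ ≤ 1 := hc₀S.trans (Real.exp_le_one_iff.2 (neg_nonpos.2 hS0))
    nlinarith

theorem statement_12_general (q : ℕ) [NeZero q] (hq : 2 ≤ q) (k : ℕ) :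
    (∀ p ∈ Set.Ioo (0 : ℝ) 1, kstar p q < (k : ℝ) →
      ∃ δ : ℝ, 0 < δ ∧ ∃ c₀ : ℝ, 0 < c₀ ∧
        ∀ (n : ℕ) (M : RegSpace (ZMod q) (ZMod q) n), M.IsRegModel (Qsync q p) k →
          1 - c₀⁻¹ * Real.exp (-c₀ * (Real.log n) ^ 2) ≤
            M.P.real {ω | (typicalSet (Qsync q p) (ηseq n) (M.G ω) fun e => M.Yobs e ω).Nonempty ∧
              ∀ θ ∈ typicalSet (Qsync q p) (ηseq n) (M.G ω) fun e => M.Yobs e ω,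
                δ ≤ dTVvert θ (M.θ0 ω)}) ∧
    (∃ C : ℝ, 0 < C ∧ ∃ p₀ ∈ Set.Ioo (0 : ℝ) 1, ∀ p ∈ Set.Ioo p₀ (1 : ℝ),
      |kstar p q - 4 * Real.log q / (((q : ℝ) - 1) * (1 - p) ^ 2)| ≤ C / (1 - p)) := by
  refine ⟨fun p hp hkp => ?_, exists_abs_kstar_sub_le hq⟩
  have hq1 : (1 : ℝ) ≤ q := by exact_mod_cast one_le_two.trans hq
  have hk : 0 < k := by exact_mod_cast (kstar_nonneg hq hp).trans_lt hkp
  obtain ⟨δ, hδ, hoverlap⟩ := exists_eventually_measureReal_dTVvert_lt_le hq hp hkp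
  obtain ⟨n₀, hn₀⟩ := eventually_atTop.1 ((eventually_measureReal_ηseq_lt_dTVedge_le (q := q) hk
    (Set.Ioo_subset_Icc_self hp)).and hoverlap)
  set c : ℝ := 1 / (8 * (q ^ 3) ^ 2) with hc
  have hc0 : 0 < c := by positivity
  have hc1 : c ≤ 1 := by
    rw [hc, div_le_one (by positivity)]
    linarith [one_le_pow₀ (one_le_pow₀ hq1 (n := 3)) (n := 2)]
  obtain ⟨c₀, hc₀, hconst⟩ := exists_forall_le_inv_mul_exp (fun n => sq_nonneg (Real.log n))
    (by positivity : (0 : ℝ) < 2 * q ^ 3 + 1) hc0 n₀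
  refine ⟨δ, hδ, c₀, hc₀, fun n M hM => ?_⟩
  have := hM.1
  refine sub_le_comm.1 (hconst n _ (sub_le_self 1 measureReal_nonneg) fun hn => ?_)
  obtain ⟨htrue, hlow⟩ := hn₀ n hn
  have hexp : Real.exp (-Real.log n ^ 2) ≤ Real.exp (-c * Real.log n ^ 2) := by
    rw [Real.exp_le_exp]
    nlinarith [sq_nonneg (Real.log n)]
  linarith [M.one_sub_le_measureReal_typicalSet (Qsync q p) (ηseq n) δ, htrue M hM, hlow M hM]

/-- Corollary for ℤ_q-synchronization: above k_*(p;q), typical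
estimators are non-trivially correlated with the truth w.h.p.; and the asymptotic
expansion of k_*(p;q) as p → 1. -/
theorem statement_12
    (q : ℕ) [NeZero q] (hq : 2 ≤ q) (k : ℕ) (hk : 3 ≤ k) :
    (∀ p ∈ Set.Ioo (0:ℝ) 1, kstar p q < (k : ℝ) →
      ∃ δ : ℝ, 0 < δ ∧ ∃ c₀ : ℝ, 0 < c₀ ∧
        ∀ n : ℕ, Even (n * k) →
        ∀ M : RegSpace (ZMod q) (ZMod q) n, M.IsRegModel (Qsync q p) k →
        ∀ θhat : M.Ω → Fin n → ZMod q, IsTypEstimator (Qsync q p) M θhat →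
          1 - c₀⁻¹ * Real.exp (-c₀ * (Real.log n) ^ 2) ≤
            (M.P {ω | δ ≤ dTVvert (θhat ω) (M.θ0 ω)}).toReal) ∧
    (∃ C : ℝ, 0 < C ∧ ∃ p₀ ∈ Set.Ioo (0:ℝ) 1, ∀ p ∈ Set.Ioo p₀ (1:ℝ),
      |kstar p q - 4 * Real.log q / (((q : ℝ) - 1) * (1 - p) ^ 2)| ≤ C / (1 - p)) := by
  refine (statement_12_general q hq k).imp_left fun h p hp hkp => ?_
  obtain ⟨δ, hδ, c₀, hc₀, hbound⟩ := h p hp hkp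
  refine ⟨δ, hδ, c₀, hc₀, fun n _ M hM θhat hθ => (hbound n M hM).trans ?_⟩
  have := hM.1
  exact measureReal_mono (fun ω hω => hω.2 _ (hθ.2 ω hω.1)) (measure_ne_top _ _)

end
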